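/- There exists β₀ > 0 such that for every inverse temperature β ∈ (0,β₀), there exist constants c_β > 0 and C_β < ∞ such that for every integer N ≥ 2, the variance of the height at the origin under the discrete Gaussian long-range chain with range exponent α = 2 satisfies c_β ln N ≤ Var_{N,β,2}[φ(0)] ≤ C_β ln N. -/

import Mathlib

noncomputable section

/-- Configurations of the long-range chain of length `N`: integer-valued height functions
on `ℤ` vanishing outside `{-N, …, N}`. -/
def ChainConfig (N : ℕ) : Type :=
  {φ : ℤ → ℤ // ∀ k : ℤ, (N : ℤ) < |k| → φ k = 0}

/-- Energy `β ∑_{i ≠ j} |φ(i) − φ(j)|^q / |i − j|^α` of a configuration of the long-range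
chain with potential exponent `q` and range exponent `α`. -/
def chainEnergy (β α q : ℝ) (φ : ℤ → ℤ) : ℝ :=
  β * ∑' p : ℤ × ℤ,
      if p.1 = p.2 then 0
      else |((φ p.1 - φ p.2 : ℤ) : ℝ)| ^ q / |((p.1 - p.2 : ℤ) : ℝ)| ^ α

/-- Boltzmann weight of a configuration. -/
def chainWeight (β α q : ℝ) (φ : ℤ → ℤ) : ℝ :=
  Real.exp (-chainEnergy β α q φ)

/-- Partition function of the long-range chain. -/
def chainZ (N : ℕ) (β α q : ℝ) : ℝ :=
  ∑' φ : ChainConfig N, chainWeight β α q φ.val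

/-- Mean of the height at the origin. -/
def chainMean (N : ℕ) (β α q : ℝ) : ℝ :=
  (∑' φ : ChainConfig N, ((φ.val 0 : ℤ) : ℝ) * chainWeight β α q φ.val) / chainZ N β α q

/-- Variance of the height at the origin under the long-range chain `μ_{N,β,α}`
(with potential exponent `q`; `q = 2` is the discrete Gaussian chain,
`q ∈ (0,2)` the `q`-SOS chain). -/
def chainVar (N : ℕ) (β α q : ℝ) : ℝ :=
  (∑' φ : ChainConfig N, ((φ.val 0 : ℤ) : ℝ) ^ 2 * chainWeight β α q φ.val) / chainZ N β α q
    - chainMean N β α q ^ 2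

end

/-!
The discrete Gaussian with weight `exp (-Q φ)` on a lattice satisfies a correlation inequality of
Ginibre type: restricting it to a sublattice and tilting it by a positive definite function does not
increase second moments. Indeed, rotating two independent copies by `π / 4` turns the difference of
second moments into a sum, over the cosets of a sublattice, of positive semidefinite quadratic
forms.

Upper bound: lowering the quadratic form raises the variance, and the energy dominates
`φ(0)² / log N` because averages over consecutive dyadic blocks telescope to `φ(0)` at a cost of
order one per scale. A diagonal form with this coefficient at the origin gives independent
one-dimensional Gaussians.

Lower bound: restrict to symmetric fields, described by their increments on the half-line, and raise
the energy to a hierarchical one, in which the increments are grouped in triples, the triple sums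
are grouped in triples again, and so on. This comparison holds because passing from a field to its
sample on every third site costs only nearest-neighbour energy. After a further positive definite
tilt the increments at every scale take values in `{-1, 0, 1}`. Each scale can then be summed out
exactly, the ratio of the masses at `±1` and `0` stays bounded below at high temperature, and so
each of the `log N` scales contributes a fixed amount to the variance of `φ(0)`, the sum of all
increments.
-/

section PositiveDefinite

open Matrix

variable {H H' ι : Type*}

theorem posSemidef_iff_sum_nonneg {K : Matrix H H ℝ} :
    K.PosSemidef ↔ K.IsSymm ∧
      ∀ (T : Finset H) (c : H → ℝ), 0 ≤ ∑ i ∈ T, ∑ j ∈ T, c i * K i j * c j := by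
  classical
  refine ⟨fun hK => ⟨by simpa [IsHermitian, IsSymm] using hK.1, fun T c => ?_⟩,
    fun ⟨hsymm, hK⟩ => ⟨by simpa [IsHermitian, IsSymm] using hsymm, fun x => ?_⟩⟩
  · have hsum := hK.2 (∑ i ∈ T, Finsupp.single i (c i))
    have hcoeff : ∀ i ∈ T, (∑ i ∈ T, Finsupp.single i (c i)) i = c i := fun i hi => by
      simp [Finsupp.finsetSum_apply, Finsupp.single_apply, hi]
    have hsupp : (∑ i ∈ T, Finsupp.single i (c i)).support ⊆ T := fun i hi => by
      by_contra hiT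
      simp [Finsupp.finsetSum_apply, Finsupp.single_apply, hiT] at hi
    rw [Finsupp.sum_of_support_subset _ hsupp _ (by simp)] at hsum
    refine hsum.trans_eq (Finset.sum_congr rfl fun i hi => ?_)
    rw [Finsupp.sum_of_support_subset _ hsupp _ (by simp)]
    exact Finset.sum_congr rfl fun j hj => by rw [hcoeff i hi, hcoeff j hj, star_trivial]
  · simpa [Finsupp.sum] using hK x.support x

theorem posSemidef_rankOne (c : H → ℝ) : (of fun i j => c i * c j).PosSemidef := by
  refine posSemidef_iff_sum_nonneg.2 ⟨IsSymm.ext fun i j => by simp [mul_comm], fun T x => ?_⟩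
  calc 0 ≤ (∑ i ∈ T, x i * c i) * ∑ j ∈ T, x j * c j := mul_self_nonneg _
    _ = ∑ i ∈ T, ∑ j ∈ T, x i * (of fun i j => c i * c j) i j * x j := by
      simp only [Finset.sum_mul_sum, of_apply]
      exact Finset.sum_congr rfl fun i _ => Finset.sum_congr rfl fun j _ => by ring

theorem posSemidef_of_hasSum {K : ι → Matrix H H ℝ} {M : Matrix H H ℝ}
    (hK : ∀ n, (K n).PosSemidef) (hM : ∀ i j, HasSum (fun n => K n i j) (M i j)) :
    M.PosSemidef := by
  simp only [posSemidef_iff_sum_nonneg] at hK ⊢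
  refine ⟨IsSymm.ext fun i j => ?_, fun T c => ?_⟩
  · refine (hM j i).unique ((hM i j).congr_fun fun n => ?_)
    exact (hK n).1.apply i j
  · have hsum : HasSum (fun n => ∑ i ∈ T, ∑ j ∈ T, c i * K n i j * c j)
        (∑ i ∈ T, ∑ j ∈ T, c i * M i j * c j) :=
      hasSum_sum fun i _ => hasSum_sum fun j _ => ((hM i j).mul_left _).mul_right _
    exact hsum.nonneg fun n => (hK n).2 T c

theorem posSemidef_map_exp {K : Matrix H H ℝ} (hK : K.PosSemidef) :
    (K.map Real.exp).PosSemidef := by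
  have hpow : ∀ n : ℕ, (K.map (· ^ n)).PosSemidef := fun n => by
    induction n with
    | zero => simpa [Matrix.map] using posSemidef_rankOne fun _ : H => (1 : ℝ)
    | succ n ih =>
      rw [show K.map (· ^ (n + 1)) = K.map (· ^ n) ⊙ K by ext; simp [pow_succ]]
      exact ih.hadamard hK
  refine posSemidef_of_hasSum (fun n : ℕ => (hpow n).smul (a := ((n.factorial : ℝ)⁻¹))
    (by positivity)) fun i j => ?_
  simpa [Real.exp_eq_exp_ℝ, div_eq_inv_mul] using NormedSpace.expSeries_div_hasSum_exp (K i j)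

theorem posSemidef_polar {E : Type*} [AddCommGroup E] [Module ℝ E] {R : QuadraticForm ℝ E}
    (hR : ∀ x, 0 ≤ R x) (f : H → E) :
    (of fun a b => QuadraticMap.polar R (f a) (f b)).PosSemidef := by
  refine posSemidef_iff_sum_nonneg.2
    ⟨IsSymm.ext fun a b => QuadraticMap.polar_comm _ _ _, fun T c => ?_⟩
  calc 0 ≤ (2 : ℝ) • R (∑ a ∈ T, c a • f a) := smul_nonneg two_pos.le (hR _)
    _ = R.polarBilin (∑ a ∈ T, c a • f a) (∑ a ∈ T, c a • f a) := by
      rw [QuadraticMap.polarBilin_apply_apply, QuadraticMap.polar_self, two_smul, two_nsmul]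
    _ = _ := by
      simp only [map_sum, LinearMap.sum_apply, map_smul, LinearMap.smul_apply, smul_eq_mul,
        QuadraticMap.polarBilin_apply_apply, of_apply, Finset.mul_sum]
      rw [Finset.sum_comm]
      exact Finset.sum_congr rfl fun a _ => Finset.sum_congr rfl fun b _ => by ring

variable [AddCommGroup H] [AddCommGroup H']

/-- A real function on an abelian group is positive definite when the kernel `F (i - j)` is
positive semidefinite. -/
def IsPositiveDefinite (F : H → ℝ) : Prop :=
  (of fun i j => F (i - j)).PosSemidef

namespace IsPositiveDefinite

variable {F G : H → ℝ}

theorem one : IsPositiveDefinite fun _ : H => (1 : ℝ) := by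
  simpa [IsPositiveDefinite] using posSemidef_rankOne fun _ : H => (1 : ℝ)

theorem mul (hF : IsPositiveDefinite F) (hG : IsPositiveDefinite G) :
    IsPositiveDefinite fun h => F h * G h :=
  hF.hadamard hG

theorem prod {s : Finset ι} {F : ι → H → ℝ} (hF : ∀ i ∈ s, IsPositiveDefinite (F i)) :
    IsPositiveDefinite fun h => ∏ i ∈ s, F i h := by
  classical
  induction s using Finset.induction_on with
  | empty => simpa using one
  | insert a s ha ih =>
    simp only [Finset.prod_insert ha]
    exact (hF a (Finset.mem_insert_self a s)).mul
      (ih fun i hi => hF i (Finset.mem_insert_of_mem hi))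

theorem comp_addMonoidHom (hF : IsPositiveDefinite F) (f : H' →+ H) :
    IsPositiveDefinite fun h => F (f h) := by
  have hsub := hF.submatrix f
  rwa [show ((of fun i j => F (i - j)).submatrix f f) = of fun i j => F (f (i - j)) by
    ext; simp] at hsub

theorem abs_le_zero (hF : IsPositiveDefinite F) (h : H) : |F h| ≤ F 0 := by
  have hpsd := hF.submatrix ![0, h]
  have hsymm : F (-h) = F h := by simpa using hpsd.1.apply 1 0
  have hplus := (posSemidef_iff_sum_nonneg.1 hpsd).2 Finset.univ ![1, 1]
  have hminus := (posSemidef_iff_sum_nonneg.1 hpsd).2 Finset.univ ![1, -1]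
  simp only [submatrix_apply, of_apply, Fin.sum_univ_two, cons_val_zero, cons_val_one, sub_self,
    zero_sub, sub_zero, hsymm] at hplus hminus
  exact abs_le.2 ⟨by linarith, by linarith⟩

theorem exp_neg_quadraticForm {E : Type*} [AddCommGroup E] [Module ℝ E] {R : QuadraticForm ℝ E}
    (hR : ∀ x, 0 ≤ R x) : IsPositiveDefinite fun x => Real.exp (-R x) := by
  -- the kernel is the exponential of the polar form times a rank-one kernel
  have hexp := (posSemidef_map_exp (posSemidef_polar hR id)).hadamard
    (posSemidef_rankOne fun x => Real.exp (-R x))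
  refine (congrArg PosSemidef ?_).mpr hexp
  ext x y
  have hsub : R (x - y) = R x + R y - QuadraticMap.polar R x y := by
    rw [sub_eq_add_neg, QuadraticMap.map_add R, QuadraticMap.map_neg, QuadraticMap.polar_neg_right]
    ring
  simp only [of_apply, hadamard_apply, map_apply, id, ← Real.exp_add, hsub]
  ring_nf

end IsPositiveDefinite

end PositiveDefinite

section Ginibre

theorem tsum_prod_self_nonneg {H : Type*} {G : H × H → ℝ}
    (hG : ∀ T : Finset H, 0 ≤ ∑ p ∈ T ×ˢ T, G p) : 0 ≤ ∑' p, G p := by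
  by_cases hsum : Summable G
  · have hdiag : Filter.Tendsto (fun T : Finset H => T ×ˢ T) .atTop .atTop :=
      Filter.tendsto_finsetProd_atTop.comp Filter.tendsto_atTop_diagonal
    exact ge_of_tendsto' (hsum.hasSum.comp hdiag) hG
  · rw [tsum_eq_zero_of_not_summable hsum]

variable {V H : Type*} [AddCommGroup V] [AddCommGroup H]

theorem exists_equiv_add_of_injective {f : H →+ V} (hf : Function.Injective f) :
    ∃ (S : Set V) (e : S × H ≃ V), ∀ c h, e (c, h) = c + f h := by
  obtain ⟨S, hS, -⟩ := AddSubgroup.exists_isComplement_left f.range 0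
  exact ⟨S, ((Equiv.refl S).prodCongr (f.ofInjective hf).toEquiv).trans (.ofBijective _ hS),
    fun c h => rfl⟩

theorem IsPositiveDefinite.summable_mul {F w : H → ℝ} (hF : IsPositiveDefinite F)
    (hw : Summable w) : Summable fun h => F h * w h := by
  refine Summable.of_norm_bounded (hw.norm.mul_left (F 0)) fun h => ?_
  rw [norm_mul]
  exact mul_le_mul_of_nonneg_right (hF.abs_le_zero h) (norm_nonneg _)

theorem summable_mul_shift_mul {f : H →+ V} (hf : Function.Injective f) {a : V → ℝ}
    (ha : Summable fun v => |a v|) {F : H → ℝ} (hF : IsPositiveDefinite F) :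
    Summable fun p : V × H => a p.1 * a (p.1 - f p.2) * F p.2 := by
  have hpairs : Summable fun p : V × V => |a p.1| * |a p.2| :=
    ha.mul_of_nonneg ha (fun _ => abs_nonneg _) (fun _ => abs_nonneg _)
  have hinj : Function.Injective fun p : V × H => (p.1, p.1 - f p.2) := by
    rintro ⟨u, h⟩ ⟨u', h'⟩ heq
    simp only [Prod.mk.injEq] at heq
    obtain ⟨rfl, heq⟩ := heq
    rw [hf (sub_right_injective heq)]
  refine Summable.of_norm_bounded ((hpairs.comp_injective hinj).mul_right (F 0)) fun p => ?_
  simp only [Real.norm_eq_abs, abs_mul, Function.comp_apply]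
  exact mul_le_mul_of_nonneg_left (hF.abs_le_zero _) (by positivity)

-- On each coset `c + f H` the sum is the quadratic form of the kernel `F (s - s')`.
theorem tsum_mul_shift_mul_nonneg {f : H →+ V} (hf : Function.Injective f) {a : V → ℝ}
    (ha : Summable fun v => |a v|) {F : H → ℝ} (hF : IsPositiveDefinite F) :
    0 ≤ ∑' p : V × H, a p.1 * a (p.1 - f p.2) * F p.2 := by
  obtain ⟨S, e, he⟩ := exists_equiv_add_of_injective hf
  let E : S × (H × H) ≃ V × H :=
    { toFun q := (e (q.1, q.2.1), q.2.1 - q.2.2)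
      invFun p := ((e.symm p.1).1, ((e.symm p.1).2, (e.symm p.1).2 - p.2))
      left_inv := by rintro ⟨c, s, s'⟩; simp
      right_inv := by rintro ⟨u, h⟩; simp }
  have hE : ∀ c s s', a (E (c, s, s')).1 * a ((E (c, s, s')).1 - f (E (c, s, s')).2) *
      F (E (c, s, s')).2 = a (c + f s) * F (s - s') * a (c + f s') := by
    intro c s s'
    simp only [E, Equiv.coe_fn_mk, he, map_sub]
    rw [mul_right_comm, add_sub_assoc, sub_sub_cancel]
  rw [← E.tsum_eq]
  refine (E.summable_iff.2 (summable_mul_shift_mul hf ha hF)).tsum_prod.ge.trans' ?_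
  refine tsum_nonneg fun c => tsum_prod_self_nonneg fun T => ?_
  simp only [Function.comp_apply, Finset.sum_product, hE]
  exact (posSemidef_iff_sum_nonneg.1 hF).2 T fun s => a (c + f s)

-- Rotating the pair `(v, ι h)` to `(v + ι h, v - ι h)` turns `Q v + Q (ι h)` into
-- `(Q (v + ι h) + Q (v - ι h)) / 2` and `x v ^ 2 - x (ι h) ^ 2` into `x (v + ι h) * x (v - ι h)`.
theorem ginibre_inequality [IsAddTorsionFree V] {ι : H →+ V} (hι : Function.Injective ι)
    {Q : V → ℝ} (hQ : ∀ u v, Q (u + v) + Q (u - v) = 2 * Q u + 2 * Q v) (x : V →+ ℝ)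
    (hmass : Summable fun v => Real.exp (-Q v))
    (hfirst : Summable fun v => |x v| * Real.exp (-(Q v / 2)))
    (hsecond : Summable fun v => x v ^ 2 * Real.exp (-Q v))
    {F : H → ℝ} (hF : IsPositiveDefinite F) :
    (∑' v, Real.exp (-Q v)) * ∑' h, x (ι h) ^ 2 * (F h * Real.exp (-Q (ι h))) ≤
      (∑' v, x v ^ 2 * Real.exp (-Q v)) * ∑' h, F h * Real.exp (-Q (ι h)) := by
  have hmassH : Summable fun h => F h * Real.exp (-Q (ι h)) :=
    hF.summable_mul (hmass.comp_injective hι)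
  have hsecondH : Summable fun h => x (ι h) ^ 2 * (F h * Real.exp (-Q (ι h))) :=
    (hF.summable_mul (hsecond.comp_injective hι)).congr fun h => mul_left_comm _ _ _
  have hdouble : Function.Injective (ι + ι) := fun h h' heq =>
    hι (nsmul_right_injective two_ne_zero (by simpa [two_nsmul] using heq))
  have hrot := tsum_mul_shift_mul_nonneg hdouble (a := fun v => x v * Real.exp (-(Q v / 2)))
    (by simpa [abs_mul] using hfirst) hF
  rw [tsum_mul_tsum_of_summable_norm hmass.norm hsecondH.norm,
    tsum_mul_tsum_of_summable_norm hsecond.norm hmassH.norm, ← sub_nonneg,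
    ← (summable_mul_of_summable_norm hsecond.norm hmassH.norm).tsum_sub
      (summable_mul_of_summable_norm hmass.norm hsecondH.norm)]
  let shear : V × H ≃ V × H :=
    { toFun p := (p.1 + ι p.2, p.2)
      invFun p := (p.1 - ι p.2, p.2)
      left_inv := by rintro ⟨v, h⟩; simp
      right_inv := by rintro ⟨v, h⟩; simp }
  rw [← shear.tsum_eq] at hrot
  refine hrot.trans_eq (tsum_congr fun ⟨v, h⟩ => ?_)
  have hweight : Real.exp (-(Q (v + ι h) / 2)) * Real.exp (-(Q (v - ι h) / 2)) =
      Real.exp (-Q v) * Real.exp (-Q (ι h)) := by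
    rw [← Real.exp_add, ← Real.exp_add]
    congr 1
    linarith [hQ v (ι h)]
  simp only [shear, Equiv.coe_fn_mk, AddMonoidHom.add_apply, add_sub_add_right_eq_sub, map_add,
    map_sub]
  linear_combination (x v + x (ι h)) * (x v - x (ι h)) * F h * hweight

end Ginibre

section GaussianSums

theorem summable_abs_pow_mul_exp_neg {κ : ℝ} (hκ : 0 < κ) (k : ℕ) :
    Summable fun n : ℤ => |(n : ℝ)| ^ k * Real.exp (-(κ * (n : ℝ) ^ 2)) := by
  refine (summable_pow_mul_jacobiTheta₂_term_bound 0 (T := κ / Real.pi) (by positivity) k).congr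
    fun n => ?_
  rw [Int.cast_abs]
  congr 2
  field_simp
  ring

theorem mul_sq_mul_exp_le_sub {κ : ℝ} (hκ : 0 ≤ κ) (n : ℤ) :
    κ * ((n : ℝ) ^ 2 * Real.exp (-(κ * (n : ℝ) ^ 2))) ≤
      n * (Real.exp (-(κ * ((n - 1 : ℤ) : ℝ) ^ 2)) -
        Real.exp (-(κ * ((n + 1 : ℤ) : ℝ) ^ 2))) := by
  have key : ∀ x : ℝ, 1 ≤ x → κ * (x ^ 2 * Real.exp (-(κ * x ^ 2))) ≤
      x * (Real.exp (-(κ * (x - 1) ^ 2)) - Real.exp (-(κ * (x + 1) ^ 2))) := by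
    intro x hx
    have hprev : Real.exp (-(κ * x ^ 2)) * (κ * (2 * x - 1) + 1) ≤
        Real.exp (-(κ * (x - 1) ^ 2)) := by
      rw [show -(κ * (x - 1) ^ 2) = -(κ * x ^ 2) + κ * (2 * x - 1) by ring, Real.exp_add]
      exact mul_le_mul_of_nonneg_left (Real.add_one_le_exp _) (Real.exp_pos _).le
    have hnext : Real.exp (-(κ * (x + 1) ^ 2)) ≤ Real.exp (-(κ * x ^ 2)) :=
      Real.exp_le_exp.2 (by nlinarith)
    have hslope : κ * x ≤ κ * (2 * x - 1) := by nlinarith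
    calc κ * (x ^ 2 * Real.exp (-(κ * x ^ 2)))
        = x * (Real.exp (-(κ * x ^ 2)) * (κ * x)) := by ring
      _ ≤ x * (Real.exp (-(κ * x ^ 2)) * (κ * (2 * x - 1))) := by gcongr
      _ ≤ _ := by gcongr; linarith
  push_cast
  rcases lt_trichotomy n 0 with hn | rfl | hn
  · have := key (-n) (by exact_mod_cast (by omega : 1 ≤ -n))
    rw [neg_sq, show (-(n : ℝ) - 1) ^ 2 = (n + 1) ^ 2 by ring,
      show (-(n : ℝ) + 1) ^ 2 = (n - 1) ^ 2 by ring] at this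
    linarith
  · simp
  · exact key n (by exact_mod_cast hn)

-- Summation by parts against `n * (a (n - 1) - a (n + 1))` with `a n = exp (-κ n ^ 2)`.
theorem tsum_sq_mul_exp_neg_le {κ : ℝ} (hκ : 0 < κ) :
    ∑' n : ℤ, (n : ℝ) ^ 2 * Real.exp (-(κ * (n : ℝ) ^ 2)) ≤
      2 / κ * ∑' n : ℤ, Real.exp (-(κ * (n : ℝ) ^ 2)) := by
  set a : ℤ → ℝ := fun n => Real.exp (-(κ * (n : ℝ) ^ 2))
  have hmass : Summable a := by simpa using summable_abs_pow_mul_exp_neg hκ 0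
  have hfirst : Summable fun n : ℤ => (n : ℝ) * a n :=
    Summable.of_norm (by simpa [a, abs_mul] using summable_abs_pow_mul_exp_neg hκ 1)
  have hsecond : Summable fun n : ℤ => (n : ℝ) ^ 2 * a n := by
    simpa using summable_abs_pow_mul_exp_neg hκ 2
  have hprev : HasSum (fun n : ℤ => (n : ℝ) * a (n - 1)) (∑' n : ℤ, ((n : ℝ) * a n + a n)) := by
    refine ((Equiv.subRight (1 : ℤ)).hasSum_iff.2 (hfirst.add hmass).hasSum).congr_fun fun n => ?_
    simp only [Function.comp_apply, Equiv.subRight_apply, Int.cast_sub, Int.cast_one]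
    ring
  have hnext : HasSum (fun n : ℤ => (n : ℝ) * a (n + 1)) (∑' n : ℤ, ((n : ℝ) * a n - a n)) := by
    refine ((Equiv.addRight (1 : ℤ)).hasSum_iff.2 (hfirst.sub hmass).hasSum).congr_fun fun n => ?_
    simp only [Function.comp_apply, Equiv.coe_addRight, Int.cast_add, Int.cast_one]
    ring
  have hparts := hasSum_le (mul_sq_mul_exp_le_sub hκ.le) (hsecond.hasSum.mul_left κ)
    ((hprev.sub hnext).congr_fun fun n => mul_sub _ _ _)
  rw [hfirst.tsum_add hmass, hfirst.tsum_sub hmass] at hparts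
  rw [div_mul_eq_mul_div, le_div_iff₀ hκ]
  linarith

theorem summable_prod_pi {T α : Type*} [Fintype T] {f : T → α → ℝ} (hf : ∀ i n, 0 ≤ f i n)
    (hsum : ∀ i, Summable (f i)) : Summable fun φ : T → α => ∏ i, f i (φ i) := by
  classical
  refine summable_of_sum_le (c := ∏ i, ∑' n, f i n)
    (fun φ => Finset.prod_nonneg fun i _ => hf i _) fun U => ?_
  have hU : U ⊆ Fintype.piFinset fun i => U.image fun φ => φ i := fun φ hφ =>
    Fintype.mem_piFinset.2 fun i => Finset.mem_image_of_mem (fun φ : T → α => φ i) hφ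
  calc ∑ φ ∈ U, ∏ i, f i (φ i)
      ≤ ∑ φ ∈ Fintype.piFinset fun i => U.image fun φ => φ i, ∏ i, f i (φ i) :=
        Finset.sum_le_sum_of_subset_of_nonneg hU
          fun φ _ _ => Finset.prod_nonneg fun i _ => hf i _
    _ = ∏ i, ∑ n ∈ U.image fun φ => φ i, f i n := (Finset.prod_univ_sum _ _).symm
    _ ≤ ∏ i, ∑' n, f i n := Finset.prod_le_prod (fun i _ => Finset.sum_nonneg fun n _ => hf i n)
        fun i _ => (hsum i).sum_le_tsum _ fun n _ => hf i n

end GaussianSums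

section DiscreteGaussian

variable {T : Type*}

/-- The inclusion of the lattice `ℤ^T` in `ℝ^T`. -/
abbrev latticeInclusion (T : Type*) : (T → ℤ) →+ (T → ℝ) :=
  (Int.castAddHom ℝ).compLeft T

/-- The unnormalised weight `exp (-Q φ)` of the discrete Gaussian on `ℤ^T`. -/
noncomputable def gaussianWeight (Q : QuadraticForm ℝ (T → ℝ)) (φ : T → ℤ) : ℝ :=
  Real.exp (-Q (latticeInclusion T φ))

/-- The second moment of the coordinate `t` under the discrete Gaussian on `ℤ^T` with weight
`exp (-Q φ)`. -/
noncomputable def gaussianSecondMoment (Q : QuadraticForm ℝ (T → ℝ)) (t : T) : ℝ :=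
  (∑' φ : T → ℤ, (φ t : ℝ) ^ 2 * gaussianWeight Q φ) / ∑' φ, gaussianWeight Q φ

theorem quadraticMap_parallelogram {E : Type*} [AddCommGroup E] [Module ℝ E]
    (Q : QuadraticForm ℝ E) (x y : E) : Q (x + y) + Q (x - y) = 2 * Q x + 2 * Q y := by
  rw [sub_eq_add_neg, QuadraticMap.map_add Q, QuadraticMap.map_add Q, QuadraticMap.map_neg,
    QuadraticMap.polar_neg_right]
  ring

theorem gaussianWeight_pos (Q : QuadraticForm ℝ (T → ℝ)) (φ : T → ℤ) : 0 < gaussianWeight Q φ :=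
  Real.exp_pos _

theorem exists_mul_sum_sq_le_of_posDef [Fintype T] {Q : QuadraticForm ℝ (T → ℝ)} (hQ : Q.PosDef) :
    ∃ κ > 0, ∀ x, κ * ∑ i, x i ^ 2 ≤ Q x := by
  cases isEmpty_or_nonempty T
  · exact ⟨1, one_pos, fun x => by simp [Subsingleton.elim x 0]⟩
  have hcont : Continuous Q := by
    let B := LinearMap.toContinuousBilinearMap (QuadraticMap.associated (R := ℝ) Q)
    exact (B.continuous₂.comp (continuous_id.prodMk continuous_id)).congr
      (QuadraticMap.associated_eq_self_apply ℝ Q)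
  obtain ⟨y, hy, hmin⟩ := (isCompact_sphere (0 : T → ℝ) 1).exists_isMinOn
    (NormedSpace.sphere_nonempty.2 zero_le_one) hcont.continuousOn
  have hy0 : y ≠ 0 := ne_zero_of_mem_unit_sphere ⟨y, hy⟩
  have hscale : ∀ x, Q y * ‖x‖ ^ 2 ≤ Q x := fun x => by
    rcases eq_or_ne x 0 with rfl | hx
    · simp
    · have hle : Q y ≤ Q (‖x‖⁻¹ • x) := hmin (by simp [norm_smul, hx])
      rw [QuadraticMap.map_smul, smul_eq_mul] at hle
      calc Q y * ‖x‖ ^ 2 ≤ ‖x‖⁻¹ * ‖x‖⁻¹ * Q x * ‖x‖ ^ 2 := by gcongr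
        _ = Q x := by field_simp [norm_ne_zero_iff.2 hx]
  refine ⟨Q y / Fintype.card T, div_pos (hQ y hy0) (by positivity), fun x => ?_⟩
  have hsum : ∑ i, x i ^ 2 ≤ Fintype.card T * ‖x‖ ^ 2 := by
    refine (Finset.sum_le_card_nsmul _ _ (‖x‖ ^ 2) fun i _ => ?_).trans_eq (by simp)
    exact sq_le_sq.2 (by simpa using norm_le_pi_norm x i)
  calc Q y / Fintype.card T * ∑ i, x i ^ 2
      ≤ Q y / Fintype.card T * (Fintype.card T * ‖x‖ ^ 2) :=
        mul_le_mul_of_nonneg_left hsum (div_nonneg (hQ y hy0).le (by positivity))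
    _ = Q y * ‖x‖ ^ 2 := by field_simp
    _ ≤ Q x := hscale x

variable [Finite T] {Q Q' : QuadraticForm ℝ (T → ℝ)}

theorem summable_abs_pow_mul_gaussianWeight (hQ : Q.PosDef) (t : T) (k : ℕ) :
    Summable fun φ : T → ℤ => |(φ t : ℝ)| ^ k * gaussianWeight Q φ := by
  classical
  cases nonempty_fintype T
  obtain ⟨κ, hκ, hcoercive⟩ := exists_mul_sum_sq_le_of_posDef hQ
  have hcoord : Summable fun n : ℤ => (1 + |(n : ℝ)| ^ k) * Real.exp (-(κ * (n : ℝ) ^ 2)) := by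
    refine ((summable_abs_pow_mul_exp_neg hκ 0).add
      (summable_abs_pow_mul_exp_neg hκ k)).congr fun n => ?_
    ring
  refine Summable.of_nonneg_of_le
    (fun φ => mul_nonneg (by positivity) (gaussianWeight_pos Q φ).le) (fun φ => ?_)
    (summable_prod_pi (T := T) (fun _ n => by positivity) fun _ => hcoord)
  rw [Finset.prod_mul_distrib, ← Real.exp_sum]
  refine mul_le_mul ?_ (Real.exp_le_exp.2 ?_) (gaussianWeight_pos Q φ).le
    (Finset.prod_nonneg fun i _ => by positivity)
  · calc |(φ t : ℝ)| ^ k ≤ 1 + |(φ t : ℝ)| ^ k := by linarith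
      _ ≤ ∏ i, (1 + |(φ i : ℝ)| ^ k) :=
        Finset.mul_prod_erase Finset.univ (fun i => 1 + |(φ i : ℝ)| ^ k) (Finset.mem_univ t) ▸
          le_mul_of_one_le_right (by positivity)
            (Finset.one_le_prod fun i _ => le_add_of_nonneg_right (by positivity))
  · rw [Finset.sum_neg_distrib, ← Finset.mul_sum]
    exact neg_le_neg (hcoercive _)

theorem summable_gaussianWeight (hQ : Q.PosDef) : Summable (gaussianWeight Q) := by
  rcases isEmpty_or_nonempty T with _ | ⟨⟨t⟩⟩
  · exact .of_finite
  · simpa using summable_abs_pow_mul_gaussianWeight hQ t 0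

theorem summable_sq_mul_gaussianWeight (hQ : Q.PosDef) (t : T) :
    Summable fun φ : T → ℤ => (φ t : ℝ) ^ 2 * gaussianWeight Q φ := by
  simpa using summable_abs_pow_mul_gaussianWeight hQ t 2

theorem tsum_gaussianWeight_pos (hQ : Q.PosDef) : 0 < ∑' φ, gaussianWeight Q φ :=
  (summable_gaussianWeight hQ).tsum_pos (fun φ => (gaussianWeight_pos Q φ).le) 0
    (gaussianWeight_pos Q 0)

theorem tsum_sq_le_gaussianSecondMoment_mul {H : Type*} [AddCommGroup H] (hQ : Q.PosDef) (t : T)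
    {ι : H →+ (T → ℤ)} (hι : Function.Injective ι) {F : H → ℝ} (hF : IsPositiveDefinite F) :
    ∑' h, (ι h t : ℝ) ^ 2 * (F h * gaussianWeight Q (ι h)) ≤
      gaussianSecondMoment Q t * ∑' h, F h * gaussianWeight Q (ι h) := by
  have hhalf : Summable fun φ : T → ℤ =>
      |(φ t : ℝ)| * Real.exp (-(Q (latticeInclusion T φ) / 2)) := by
    refine (summable_abs_pow_mul_gaussianWeight (hQ.smul one_half_pos) t 1).congr fun φ => ?_
    rw [gaussianWeight, pow_one, smul_apply, smul_eq_mul, one_div_mul_eq_div]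
  have hparallelogram : ∀ φ ψ : T → ℤ, Q (latticeInclusion T (φ + ψ)) +
      Q (latticeInclusion T (φ - ψ)) =
        2 * Q (latticeInclusion T φ) + 2 * Q (latticeInclusion T ψ) := fun φ ψ => by
    rw [map_add, map_sub, quadraticMap_parallelogram]
  have hginibre := ginibre_inequality hι hparallelogram
    ((Int.castAddHom ℝ).comp (Pi.evalAddMonoidHom (fun _ : T => ℤ) t))
    (summable_gaussianWeight hQ) hhalf (summable_sq_mul_gaussianWeight hQ t) hF
  rw [gaussianSecondMoment, div_mul_eq_mul_div, le_div_iff₀' (tsum_gaussianWeight_pos hQ)]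
  exact hginibre

theorem gaussianSecondMoment_anti (hQ : Q.PosDef) (hle : ∀ x, Q x ≤ Q' x) (t : T) :
    gaussianSecondMoment Q' t ≤ gaussianSecondMoment Q t := by
  have hQ' : Q'.PosDef := fun x hx => (hQ x hx).trans_le (hle x)
  have hF : IsPositiveDefinite fun φ => Real.exp (-(Q' - Q) (latticeInclusion T φ)) :=
    (IsPositiveDefinite.exp_neg_quadraticForm fun x => sub_nonneg.2 (hle x)).comp_addMonoidHom _
  have hweight : ∀ φ, Real.exp (-(Q' - Q) (latticeInclusion T φ)) * gaussianWeight Q φ =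
      gaussianWeight Q' φ := fun φ => by
    rw [gaussianWeight, gaussianWeight, ← Real.exp_add, sub_apply]
    ring_nf
  have hcompare := tsum_sq_le_gaussianSecondMoment_mul hQ t (ι := AddMonoidHom.id _)
    Function.injective_id hF
  simp only [AddMonoidHom.id_apply, hweight] at hcompare
  rw [gaussianSecondMoment, div_le_iff₀ (tsum_gaussianWeight_pos hQ')]
  exact hcompare

end DiscreteGaussian

section DiagonalComparison

variable {T : Type*}

theorem posDef_weightedSumSquares [Fintype T] {w : T → ℝ} (hw : ∀ i, 0 < w i) :
    (QuadraticMap.weightedSumSquares ℝ w).PosDef := fun x hx => by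
  obtain ⟨i, hi⟩ := Function.ne_iff.1 hx
  rw [QuadraticMap.weightedSumSquares_apply]
  refine Finset.sum_pos' (fun j _ => smul_nonneg (hw j).le (mul_self_nonneg _))
    ⟨i, Finset.mem_univ i, smul_pos (hw i) (mul_self_pos.2 hi)⟩

-- Under a diagonal form the coordinates are independent.
theorem tsum_mul_gaussianWeight_weightedSumSquares [Fintype T] [DecidableEq T] {w : T → ℝ}
    (hw : ∀ i, 0 < w i) (t : T) {f : ℤ → ℝ}
    (hf : Summable fun n : ℤ => f n * Real.exp (-(w t * (n : ℝ) ^ 2))) :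
    ∑' φ : T → ℤ, f (φ t) * gaussianWeight (QuadraticMap.weightedSumSquares ℝ w) φ =
      (∑' n : ℤ, f n * Real.exp (-(w t * (n : ℝ) ^ 2))) *
        ∑' ψ : {j // j ≠ t} → ℤ,
          gaussianWeight (QuadraticMap.weightedSumSquares ℝ fun j : {j // j ≠ t} => w j) ψ := by
  have hrest := summable_gaussianWeight
    (posDef_weightedSumSquares fun j : {j // j ≠ t} => hw j)
  rw [tsum_mul_tsum_of_summable_norm hf.norm hrest.norm, ← (Equiv.funSplitAt t ℤ).tsum_eq]
  refine tsum_congr fun φ => ?_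
  rw [mul_assoc, gaussianWeight, gaussianWeight, ← Real.exp_add]
  simp [QuadraticMap.weightedSumSquares_apply, Fintype.sum_eq_add_sum_subtype_ne _ t, sq, add_comm]

theorem gaussianSecondMoment_weightedSumSquares_le [Fintype T] {w : T → ℝ} (hw : ∀ i, 0 < w i)
    (t : T) : gaussianSecondMoment (QuadraticMap.weightedSumSquares ℝ w) t ≤ 2 / w t := by
  classical
  have hpos := tsum_gaussianWeight_pos (posDef_weightedSumSquares hw)
  have hmass := tsum_mul_gaussianWeight_weightedSumSquares hw t (f := 1)
    (by simpa using summable_abs_pow_mul_exp_neg (hw t) 0)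
  have hsecond := tsum_mul_gaussianWeight_weightedSumSquares hw t (f := fun n => (n : ℝ) ^ 2)
    (by simpa using summable_abs_pow_mul_exp_neg (hw t) 2)
  simp only [Pi.one_apply, one_mul] at hmass
  rw [gaussianSecondMoment, div_le_iff₀ hpos, hsecond, hmass, ← mul_assoc]
  exact mul_le_mul_of_nonneg_right (tsum_sq_mul_exp_neg_le (hw t))
    (tsum_nonneg fun ψ => (gaussianWeight_pos _ ψ).le)

theorem gaussianSecondMoment_le_of_mul_sq_le [Finite T] {Q : QuadraticForm ℝ (T → ℝ)}
    (hQ : Q.PosDef) {t : T} {w : ℝ} (hw : 0 < w) (hle : ∀ x, w * x t ^ 2 ≤ Q x) :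
    gaussianSecondMoment Q t ≤ 4 / w := by
  classical
  cases nonempty_fintype T
  obtain ⟨κ, hκ, hcoercive⟩ := exists_mul_sum_sq_le_of_posDef hQ
  let u : T → ℝ := fun i => κ / 2 + if i = t then w / 2 else 0
  have hu : ∀ i, 0 < u i := fun i => by dsimp only [u]; positivity
  have hdiag : ∀ x, QuadraticMap.weightedSumSquares ℝ u x ≤ Q x := fun x => by
    have hsum : QuadraticMap.weightedSumSquares ℝ u x =
        κ / 2 * ∑ i, x i ^ 2 + w / 2 * x t ^ 2 := by
      simp [QuadraticMap.weightedSumSquares_apply, u, add_mul, Finset.sum_add_distrib,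
        Finset.mul_sum, sq]
    linarith [hcoercive x, hle x]
  calc gaussianSecondMoment Q t
      ≤ gaussianSecondMoment (QuadraticMap.weightedSumSquares ℝ u) t :=
        gaussianSecondMoment_anti (posDef_weightedSumSquares hu) hdiag t
    _ ≤ 2 / u t := gaussianSecondMoment_weightedSumSquares_le hu t
    _ ≤ 2 / (w / 2) := by
        have hut : u t = κ / 2 + w / 2 := by simp [u]
        gcongr
        linarith
    _ = 4 / w := by field_simp; norm_num

end DiagonalComparison

section DirichletForm

theorem summable_sq_div_sub_sq (g : ℤ →₀ ℝ) :
    Summable fun p : ℤ × ℤ => g p.1 ^ 2 / ((p.1 - p.2 : ℤ) : ℝ) ^ 2 := by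
  have hg : Summable fun i : ℤ => g i ^ 2 :=
    summable_of_hasFiniteSupport (g.hasFiniteSupport.subset fun i hi => by simpa using hi)
  have hprod := hg.mul_of_nonneg (Real.summable_one_div_int_pow.2 one_lt_two)
    (fun _ => sq_nonneg _) (fun _ => by positivity)
  let reflect : ℤ × ℤ ≃ ℤ × ℤ :=
    { toFun p := (p.1, p.1 - p.2)
      invFun p := (p.1, p.1 - p.2)
      left_inv := by rintro ⟨i, j⟩; simp
      right_inv := by rintro ⟨i, j⟩; simp }
  exact (reflect.summable_iff.2 hprod).congr fun p => mul_one_div _ _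

theorem summable_sub_sq_div_sub_sq (g : ℤ →₀ ℝ) :
    Summable fun p : ℤ × ℤ => (g p.1 - g p.2) ^ 2 / ((p.1 - p.2 : ℤ) : ℝ) ^ 2 := by
  have hswap : Summable fun p : ℤ × ℤ => g p.2 ^ 2 / ((p.1 - p.2 : ℤ) : ℝ) ^ 2 := by
    refine ((Equiv.prodComm ℤ ℤ).summable_iff.2 (summable_sq_div_sub_sq g)).congr fun p => ?_
    simp only [Function.comp_apply, Equiv.prodComm_apply, Prod.fst_swap, Prod.snd_swap,
      Int.cast_sub, sub_sq_comm]
  refine .of_nonneg_of_le (fun p => by positivity) (fun p => ?_)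
    (((summable_sq_div_sub_sq g).mul_left 2).add (hswap.mul_left 2))
  rw [← mul_div_assoc, ← mul_div_assoc, ← add_div]
  gcongr
  linarith [sq_nonneg (g p.1 + g p.2)]

/-- The difference quotients `(g i - g j) / (i - j)`, as an element of `ℓ²(ℤ × ℤ)`. The entries on
the diagonal are `0`, by the convention `x / 0 = 0`. -/
noncomputable def differenceQuotient : (ℤ →₀ ℝ) →ₗ[ℝ] lp (fun _ : ℤ × ℤ => ℝ) 2 where
  toFun g := ⟨fun p => (g p.1 - g p.2) / ((p.1 - p.2 : ℤ) : ℝ),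
    (memℓp_gen_iff (by norm_num)).2 (by simpa [div_pow] using summable_sub_sq_div_sub_sq g)⟩
  map_add' g h := by
    ext p
    simp only [Finsupp.add_apply, lp.coeFn_add, Pi.add_apply]
    ring
  map_smul' c g := by
    ext p
    simp only [Finsupp.smul_apply, smul_eq_mul, lp.coeFn_smul, Pi.smul_apply, RingHom.id_apply]
    ring

/-- The inverse-square Dirichlet form `∑_{i ≠ j} (g i - g j)² / (i - j)²`. -/
noncomputable def dirichletForm : QuadraticForm ℝ (ℤ →₀ ℝ) :=
  (LinearMap.BilinMap.toQuadraticMap (innerₗ _)).comp differenceQuotient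

theorem dirichletForm_apply (g : ℤ →₀ ℝ) :
    dirichletForm g = ∑' p : ℤ × ℤ, (g p.1 - g p.2) ^ 2 / ((p.1 - p.2 : ℤ) : ℝ) ^ 2 := by
  simp only [dirichletForm, QuadraticMap.comp_apply, LinearMap.BilinMap.toQuadraticMap_apply,
    innerₗ_apply_apply, lp.inner_eq_tsum]
  refine tsum_congr fun p => ?_
  simp [differenceQuotient, div_pow]

theorem sum_le_dirichletForm (g : ℤ →₀ ℝ) (s : Finset (ℤ × ℤ)) :
    ∑ p ∈ s, (g p.1 - g p.2) ^ 2 / ((p.1 - p.2 : ℤ) : ℝ) ^ 2 ≤ dirichletForm g := by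
  rw [dirichletForm_apply]
  exact (summable_sub_sq_div_sub_sq g).sum_le_tsum _ fun _ _ => by positivity

theorem dirichletForm_posDef : dirichletForm.PosDef := fun g hg => by
  obtain ⟨i, hi⟩ := Finsupp.ne_iff.1 hg
  obtain ⟨j, hj⟩ := Infinite.exists_notMem_finset g.support
  have hgj : g j = 0 := Finsupp.notMem_support_iff.1 hj
  have hij : ((i - j : ℤ) : ℝ) ≠ 0 := by
    rw [Int.cast_ne_zero, sub_ne_zero]
    rintro rfl
    exact hi hgj
  have hterm := sum_le_dirichletForm g {(i, j)}
  rw [Finset.sum_singleton, hgj, sub_zero] at hterm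
  exact lt_of_lt_of_le (div_pos (sq_pos_of_ne_zero hi) (by positivity)) hterm

/-- Extension by zero of a function on the finite set `S`. -/
noncomputable def extendByZero (S : Finset ℤ) : (S → ℝ) →ₗ[ℝ] (ℤ →₀ ℝ) :=
  Finsupp.lmapDomain ℝ ℝ Subtype.val ∘ₗ (Finsupp.linearEquivFunOnFinite ℝ ℝ S).symm.toLinearMap

variable {S : Finset ℤ}

theorem extendByZero_apply_coe (x : S → ℝ) (i : S) : extendByZero S x i = x i := by
  simp [extendByZero, Finsupp.mapDomain_apply Subtype.val_injective]

theorem extendByZero_apply_of_notMem (x : S → ℝ) {i : ℤ} (hi : i ∉ S) :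
    extendByZero S x i = 0 :=
  Finsupp.mapDomain_of_notMem_range _ _ (by simpa using hi)

theorem posDef_dirichletForm_extendByZero :
    (dirichletForm.comp (extendByZero S)).PosDef := fun x hx => by
  refine dirichletForm_posDef _ fun hzero => hx (funext fun i => ?_)
  rw [← extendByZero_apply_coe x i, hzero, Finsupp.zero_apply, Pi.zero_apply]

end DirichletForm

section Chain

/-- The quadratic form of the chain of length `N` at inverse temperature `β`, in the heights at the
sites `{-N, …, N}`. -/
noncomputable def chainForm (β : ℝ) (N : ℕ) : QuadraticForm ℝ (Finset.Icc (-N : ℤ) N → ℝ) :=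
  β • dirichletForm.comp (extendByZero _)

/-- The origin, as a site of the chain of length `N`. -/
def chainOrigin (N : ℕ) : Finset.Icc (-N : ℤ) N :=
  ⟨0, by simp⟩

theorem chainForm_apply (β : ℝ) (N : ℕ) (x : Finset.Icc (-N : ℤ) N → ℝ) :
    chainForm β N x = β * dirichletForm (extendByZero _ x) :=
  rfl

theorem chainForm_posDef {β : ℝ} (hβ : 0 < β) (N : ℕ) : (chainForm β N).PosDef :=
  posDef_dirichletForm_extendByZero.smul hβ

theorem notMem_Icc_neg_self_iff {N : ℕ} {k : ℤ} :
    k ∉ Finset.Icc (-N : ℤ) N ↔ (N : ℤ) < |k| := by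
  rw [Finset.mem_Icc, ← abs_le, not_le]

/-- A configuration of the chain is determined by its heights at the sites `{-N, …, N}`. -/
noncomputable def chainConfigEquiv (N : ℕ) : ChainConfig N ≃ (Finset.Icc (-N : ℤ) N → ℤ) where
  toFun φ i := φ.1 i
  invFun f := ⟨fun k => if h : k ∈ Finset.Icc (-N : ℤ) N then f ⟨k, h⟩ else 0,
    fun _ hk => dif_neg (notMem_Icc_neg_self_iff.2 hk)⟩
  left_inv φ := by
    refine Subtype.ext (funext fun k => ?_)
    by_cases hk : k ∈ Finset.Icc (-N : ℤ) N
    · exact dif_pos hk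
    · exact (dif_neg hk).trans (φ.2 k (notMem_Icc_neg_self_iff.1 hk)).symm
  right_inv f := funext fun i => dif_pos i.2

variable {N : ℕ}

theorem extendByZero_chainConfigEquiv (φ : ChainConfig N) (k : ℤ) :
    extendByZero _ (latticeInclusion _ (chainConfigEquiv N φ)) k = φ.1 k := by
  by_cases hk : k ∈ Finset.Icc (-N : ℤ) N
  · exact extendByZero_apply_coe _ ⟨k, hk⟩
  · rw [extendByZero_apply_of_notMem _ hk, φ.2 k (notMem_Icc_neg_self_iff.1 hk), Int.cast_zero]

theorem chainWeight_eq_gaussianWeight (β : ℝ) (φ : ChainConfig N) :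
    chainWeight β 2 2 φ.1 = gaussianWeight (chainForm β N) (chainConfigEquiv N φ) := by
  rw [chainWeight, chainEnergy, gaussianWeight, chainForm_apply, dirichletForm_apply]
  congr 3
  refine tsum_congr fun p => ?_
  rw [extendByZero_chainConfigEquiv, extendByZero_chainConfigEquiv]
  split_ifs with hp
  · simp [hp]
  · rw [Real.rpow_two, Real.rpow_two, sq_abs, sq_abs, Int.cast_sub (φ.1 p.1)]

theorem tsum_mul_chainWeight (β : ℝ) (f : ℤ → ℝ) :
    ∑' φ : ChainConfig N, f (φ.1 0) * chainWeight β 2 2 φ.1 =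
      ∑' φ, f (φ (chainOrigin N)) * gaussianWeight (chainForm β N) φ := by
  rw [← (chainConfigEquiv N).tsum_eq]
  exact tsum_congr fun φ => by rw [chainWeight_eq_gaussianWeight]; rfl

theorem tsum_mul_gaussianWeight_eq_zero {T : Type*} (Q : QuadraticForm ℝ (T → ℝ)) (t : T) :
    ∑' φ : T → ℤ, (φ t : ℝ) * gaussianWeight Q φ = 0 := by
  rw [← self_eq_neg, ← tsum_neg]
  conv_lhs => rw [← (Equiv.neg (T → ℤ)).tsum_eq]
  refine tsum_congr fun φ => ?_
  simp only [gaussianWeight, Equiv.neg_apply, map_neg, QuadraticMap.map_neg, Pi.neg_apply,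
    Int.cast_neg, neg_mul]

theorem chainVar_eq_gaussianSecondMoment (β : ℝ) :
    chainVar N β 2 2 = gaussianSecondMoment (chainForm β N) (chainOrigin N) := by
  have hmass := tsum_mul_chainWeight (N := N) β fun _ => 1
  have hfirst := tsum_mul_chainWeight (N := N) β fun n => (n : ℝ)
  have hsecond := tsum_mul_chainWeight (N := N) β fun n => (n : ℝ) ^ 2
  simp only [one_mul] at hmass
  rw [tsum_mul_gaussianWeight_eq_zero] at hfirst
  rw [chainVar, chainMean, chainZ, hfirst, hsecond, hmass, zero_div, zero_pow two_ne_zero,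
    sub_zero, gaussianSecondMoment]

end Chain

section UpperBound

theorem sq_average_sub_average_le (g : ℤ → ℝ) {A B : Finset ℤ} (hA : A.Nonempty)
    (hB : B.Nonempty) {D : ℝ} (hD : ∀ i ∈ A, ∀ j ∈ B, |((i - j : ℤ) : ℝ)| ≤ D) :
    ((∑ i ∈ A, g i) / A.card - (∑ j ∈ B, g j) / B.card) ^ 2 ≤
      D ^ 2 / (A.card * B.card) *
        ∑ p ∈ A ×ˢ B, (g p.1 - g p.2) ^ 2 / ((p.1 - p.2 : ℤ) : ℝ) ^ 2 := by
  have : (0 : ℝ) < A.card := by exact_mod_cast hA.card_pos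
  have : (0 : ℝ) < B.card := by exact_mod_cast hB.card_pos
  have hdiff : (∑ i ∈ A, g i) / A.card - (∑ j ∈ B, g j) / B.card =
      (∑ p ∈ A ×ˢ B, (g p.1 - g p.2)) / (A.card * B.card) := by
    rw [Finset.sum_sub_distrib, Finset.sum_product, Finset.sum_product]
    simp only [Finset.sum_const, nsmul_eq_mul, ← Finset.mul_sum]
    field_simp
  have hterm : ∀ p ∈ A ×ˢ B, (g p.1 - g p.2) ^ 2 ≤
      D ^ 2 * ((g p.1 - g p.2) ^ 2 / ((p.1 - p.2 : ℤ) : ℝ) ^ 2) := by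
    rintro ⟨i, j⟩ hp
    rw [Finset.mem_product] at hp
    rcases eq_or_ne i j with rfl | hij
    · simp
    · have hsq : ((i - j : ℤ) : ℝ) ^ 2 ≤ D ^ 2 :=
        sq_le_sq.2 ((hD i hp.1 j hp.2).trans (le_abs_self D))
      have hpos : 0 < ((i - j : ℤ) : ℝ) ^ 2 :=
        sq_pos_of_ne_zero (Int.cast_ne_zero.2 (sub_ne_zero.2 hij))
      rw [mul_div_left_comm]
      exact le_mul_of_one_le_right (sq_nonneg _) ((one_le_div hpos).2 hsq)
  rw [hdiff, div_pow, div_le_iff₀ (by positivity)]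
  calc (∑ p ∈ A ×ˢ B, (g p.1 - g p.2)) ^ 2
      ≤ (A ×ˢ B).card * ∑ p ∈ A ×ˢ B, (g p.1 - g p.2) ^ 2 := sq_sum_le_card_mul_sum_sq
    _ ≤ (A ×ˢ B).card *
          ∑ p ∈ A ×ˢ B, D ^ 2 * ((g p.1 - g p.2) ^ 2 / ((p.1 - p.2 : ℤ) : ℝ) ^ 2) :=
        mul_le_mul_of_nonneg_left (Finset.sum_le_sum hterm) (Nat.cast_nonneg _)
    _ = _ := by
        rw [← Finset.mul_sum, Finset.card_product, Nat.cast_mul]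
        field_simp

/-- The dyadic block `[2 ^ k - 1, 2 ^ (k + 1) - 1)`. The blocks partition the non-negative
integers, and block `0` is `{0}`. -/
noncomputable def dyadicBlock (k : ℕ) : Finset ℤ :=
  Finset.Ico (2 ^ k - 1) (2 ^ (k + 1) - 1)

/-- The average of `g` over a dyadic block. -/
noncomputable def dyadicAverage (g : ℤ → ℝ) (k : ℕ) : ℝ :=
  (∑ i ∈ dyadicBlock k, g i) / (dyadicBlock k).card

theorem card_dyadicBlock (k : ℕ) : (dyadicBlock k).card = 2 ^ k := by
  rw [dyadicBlock, Int.card_Ico, show (2 : ℤ) ^ (k + 1) - 1 - (2 ^ k - 1) = (2 ^ k : ℕ) by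
    push_cast; ring, Int.toNat_natCast]

theorem disjoint_dyadicBlock {k l : ℕ} (hkl : k ≠ l) :
    Disjoint (dyadicBlock k) (dyadicBlock l) := by
  have hmono : Monotone fun k : ℕ => (2 : ℤ) ^ k - 1 := fun a b hab =>
    sub_le_sub_right (pow_le_pow_right₀ one_le_two hab) 1
  rw [← Finset.disjoint_coe, dyadicBlock, dyadicBlock, Finset.coe_Ico, Finset.coe_Ico]
  exact hmono.pairwise_disjoint_on_Ico_succ hkl

theorem sq_dyadicAverage_sub_le (g : ℤ → ℝ) (k : ℕ) :
    (dyadicAverage g k - dyadicAverage g (k + 1)) ^ 2 ≤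
      9 / 2 * ∑ p ∈ dyadicBlock k ×ˢ dyadicBlock (k + 1),
        (g p.1 - g p.2) ^ 2 / ((p.1 - p.2 : ℤ) : ℝ) ^ 2 := by
  have hne : ∀ k, (dyadicBlock k).Nonempty := fun k =>
    Finset.card_pos.1 (card_dyadicBlock k ▸ pow_pos two_pos k)
  have hD : ∀ i ∈ dyadicBlock k, ∀ j ∈ dyadicBlock (k + 1),
      |((i - j : ℤ) : ℝ)| ≤ 3 * 2 ^ k := fun i hi j hj => by
    have hdist : |i - j| ≤ 3 * 2 ^ k := by
      simp only [dyadicBlock, Finset.mem_Ico, pow_succ] at hi hj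
      rw [abs_le]
      omega
    exact_mod_cast hdist
  refine (sq_average_sub_average_le g (hne k) (hne (k + 1)) hD).trans_eq ?_
  rw [card_dyadicBlock, card_dyadicBlock]
  congr 1
  push_cast
  field_simp
  ring

-- Telescope the dyadic averages from block `0` to block `K`.
theorem sq_apply_zero_le_mul_dirichletForm {g : ℤ →₀ ℝ} {K : ℕ}
    (hg : ∀ i : ℤ, 2 ^ K - 1 ≤ i → g i = 0) : g 0 ^ 2 ≤ 9 / 2 * K * dirichletForm g := by
  have htelescope : g 0 = ∑ k ∈ Finset.range K, (dyadicAverage g k - dyadicAverage g (k + 1)) := by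
    have hfirst : dyadicAverage g 0 = g 0 := by
      rw [dyadicAverage, card_dyadicBlock, show dyadicBlock 0 = {0} from rfl]
      simp
    have hlast : dyadicAverage g K = 0 := by
      have hzero : ∑ i ∈ dyadicBlock K, g i = 0 :=
        Finset.sum_eq_zero fun i hi => hg i (Finset.mem_Ico.1 hi).1
      rw [dyadicAverage, hzero, zero_div]
    rw [Finset.sum_range_sub', hfirst, hlast, sub_zero]
  have hdisjoint : Set.PairwiseDisjoint (Finset.range K : Set ℕ)
      fun k => dyadicBlock k ×ˢ dyadicBlock (k + 1) := fun k _ l _ hkl =>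
    Finset.disjoint_product.2 (.inl (disjoint_dyadicBlock hkl))
  have hsum := sum_le_dirichletForm g
    ((Finset.range K).biUnion fun k => dyadicBlock k ×ˢ dyadicBlock (k + 1))
  rw [Finset.sum_biUnion hdisjoint] at hsum
  calc g 0 ^ 2
      ≤ K * ∑ k ∈ Finset.range K, (dyadicAverage g k - dyadicAverage g (k + 1)) ^ 2 := by
        rw [htelescope]
        exact sq_sum_le_card_mul_sum_sq.trans_eq (by rw [Finset.card_range])
    _ ≤ K * ∑ k ∈ Finset.range K, 9 / 2 * ∑ p ∈ dyadicBlock k ×ˢ dyadicBlock (k + 1),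
          (g p.1 - g p.2) ^ 2 / ((p.1 - p.2 : ℤ) : ℝ) ^ 2 := by
        gcongr with k
        exact sq_dyadicAverage_sub_le g k
    _ ≤ K * (9 / 2 * dirichletForm g) := by
        rw [← Finset.mul_sum]
        gcongr
    _ = 9 / 2 * K * dirichletForm g := by ring

theorem mul_sq_le_chainForm {β : ℝ} (hβ : 0 ≤ β) {N K : ℕ} (hK : N + 2 ≤ 2 ^ K)
    (x : Finset.Icc (-N : ℤ) N → ℝ) :
    2 * β / (9 * K) * x (chainOrigin N) ^ 2 ≤ chainForm β N x := by
  have hK0 : (0 : ℝ) < K := by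
    rw [Nat.cast_pos, Nat.pos_iff_ne_zero]
    rintro rfl
    omega
  have hvanish : ∀ i : ℤ, 2 ^ K - 1 ≤ i → extendByZero _ x i = 0 := fun i hi => by
    refine extendByZero_apply_of_notMem x fun hmem => ?_
    have : (N : ℤ) + 2 ≤ 2 ^ K := by exact_mod_cast hK
    linarith [(Finset.mem_Icc.1 hmem).2]
  have horigin : extendByZero _ x 0 = x (chainOrigin N) :=
    extendByZero_apply_coe x (chainOrigin N)
  rw [chainForm_apply, ← horigin, div_mul_eq_mul_div, div_le_iff₀ (by positivity)]
  nlinarith [sq_apply_zero_le_mul_dirichletForm hvanish]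

theorem chainVar_le_of_le_two_pow {β : ℝ} (hβ : 0 < β) {N K : ℕ} (hK : N + 2 ≤ 2 ^ K) :
    chainVar N β 2 2 ≤ 18 * K / β := by
  rcases K.eq_zero_or_pos with rfl | hK0
  · omega
  have : (0 : ℝ) < K := Nat.cast_pos.2 hK0
  rw [chainVar_eq_gaussianSecondMoment]
  refine (gaussianSecondMoment_le_of_mul_sq_le (chainForm_posDef hβ N) (by positivity)
    (mul_sq_le_chainForm hβ.le hK)).trans_eq ?_
  field_simp
  norm_num

theorem chainVar_le_log {β : ℝ} (hβ : 0 < β) {N : ℕ} (hN : 2 ≤ N) :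
    chainVar N β 2 2 ≤ 90 / β * Real.log N := by
  have hpow : N + 2 ≤ 2 ^ (Nat.log 2 N + 2) := by
    have := Nat.lt_pow_succ_log_self one_lt_two N
    rw [pow_succ] at this ⊢
    omega
  have hlog : ((Nat.log 2 N + 2 : ℕ) : ℝ) ≤ 5 * Real.log N := by
    have hone : (1 : ℝ) ≤ Nat.log 2 N := by exact_mod_cast Nat.log_pos one_lt_two hN
    have hle : (2 : ℝ) ^ Nat.log 2 N ≤ N := by exact_mod_cast Nat.pow_log_le_self 2 (by omega)
    have hloglog := Real.log_le_log (by positivity) hle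
    rw [Real.log_pow] at hloglog
    push_cast
    nlinarith [Real.log_two_gt_d9]
  calc chainVar N β 2 2 ≤ 18 * ((Nat.log 2 N + 2 : ℕ) : ℝ) / β := chainVar_le_of_le_two_pow hβ hpow
    _ ≤ 18 * (5 * Real.log N) / β := by gcongr
    _ = 90 / β * Real.log N := by ring

end UpperBound

section MultiscaleEnergy

open scoped ENNReal

/-- The energy `∑ (g i - g j)²` over the pairs at distance at most `M`. -/
noncomputable def bandEnergy (M : ℕ) (g : ℤ → ℝ) : ℝ≥0∞ :=
  ∑' i : ℤ, ∑' j : ℤ, if |i - j| ≤ M then ENNReal.ofReal ((g i - g j) ^ 2) else 0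

/-- The nearest-neighbour energy `∑ (g (i + 1) - g i)²`. -/
noncomputable def gradientEnergy (g : ℤ → ℝ) : ℝ≥0∞ :=
  ∑' i : ℤ, ENNReal.ofReal ((g (i + 1) - g i) ^ 2)

/-- A superposition of band energies at the scales `3 ^ k`, comparable with the inverse-square
Dirichlet form. The factors `1 + 2 ^ (-k) ∈ [1, 2]` absorb the errors made in passing from one scale
to the next. -/
noncomputable def multiscaleEnergy (g : ℤ → ℝ) : ℝ≥0∞ :=
  ∑' k : ℕ, ENNReal.ofReal ((1 + (1 / 2) ^ k) / 9 ^ k) * bandEnergy (3 ^ k) g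

/-- The index `m` of the block `{3m + 1, 3m + 2, 3m + 3}` containing a site. -/
def blockIndex (i : ℤ) : ℤ :=
  (i - 1) / 3

/-- The field that samples `g` at the first site of each block `{3m + 1, 3m + 2, 3m + 3}`. -/
def coarsen (g : ℤ → ℝ) (m : ℤ) : ℝ :=
  g (3 * m + 1)

/-- The squared `ℓ²` distance from `g` to the blockwise constant extension of `coarsen g`. -/
noncomputable def coarseningError (g : ℤ → ℝ) : ℝ≥0∞ :=
  ∑' i : ℤ, ENNReal.ofReal ((g i - coarsen g (blockIndex i)) ^ 2)

theorem exists_le_three_pow_le {d : ℕ} (hd : d ≠ 0) : ∃ k : ℕ, d ≤ 3 ^ k ∧ 3 ^ k ≤ 3 * d := by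
  rcases (Nat.one_le_iff_ne_zero.2 hd).eq_or_lt with rfl | hd1
  · exact ⟨0, by norm_num⟩
  · obtain ⟨m, hm⟩ := Nat.exists_eq_succ_of_ne_zero (Nat.clog_pos (b := 3) (by norm_num) hd1).ne'
    have hlt := Nat.pow_pred_clog_lt_self (b := 3) (by norm_num) hd1
    rw [hm, Nat.pred_succ] at hlt
    exact ⟨Nat.clog 3 d, Nat.le_pow_clog (by norm_num) d, by rw [hm, Nat.pow_succ]; omega⟩

theorem exists_one_div_sq_le_multiscale_coefficient {d : ℤ} (hd : d ≠ 0) :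
    ∃ k : ℕ, |d| ≤ (3 ^ k : ℕ) ∧ 1 / (d : ℝ) ^ 2 ≤ 9 * ((1 + (1 / 2) ^ k) / 9 ^ k) := by
  obtain ⟨k, hle, hge⟩ := exists_le_three_pow_le (Int.natAbs_ne_zero.2 hd)
  refine ⟨k, by rw [Int.abs_eq_natAbs]; exact_mod_cast hle, ?_⟩
  have hd2 : (0 : ℝ) < (d : ℝ) ^ 2 := by positivity
  have hsq : (9 : ℝ) ^ k ≤ 9 * (d : ℝ) ^ 2 := by
    have hge' : (3 : ℝ) ^ k ≤ 3 * |(d : ℝ)| := by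
      rw [← Int.cast_abs, Int.abs_eq_natAbs]
      exact_mod_cast hge
    calc (9 : ℝ) ^ k = (3 ^ k) ^ 2 := by rw [← pow_mul, mul_comm, pow_mul]; norm_num
      _ ≤ (3 * |(d : ℝ)|) ^ 2 := by gcongr
      _ = 9 * (d : ℝ) ^ 2 := by rw [mul_pow, sq_abs]; norm_num
  calc 1 / (d : ℝ) ^ 2 ≤ 9 / 9 ^ k := by
        rw [div_le_div_iff₀ hd2 (by positivity)]
        linarith
    _ ≤ 9 * ((1 + (1 / 2) ^ k) / 9 ^ k) := by
        rw [← mul_div_assoc]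
        gcongr
        linarith [show (0 : ℝ) ≤ (1 / 2) ^ k by positivity]

theorem multiscaleEnergy_eq_tsum_pairs (g : ℤ → ℝ) :
    multiscaleEnergy g = ∑' p : ℤ × ℤ, ∑' k : ℕ, ENNReal.ofReal ((1 + (1 / 2) ^ k) / 9 ^ k) *
      if |p.1 - p.2| ≤ (3 ^ k : ℕ) then ENNReal.ofReal ((g p.1 - g p.2) ^ 2) else 0 := by
  rw [ENNReal.tsum_comm, multiscaleEnergy]
  refine tsum_congr fun k => ?_
  rw [ENNReal.tsum_mul_left, bandEnergy, ENNReal.tsum_prod']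

theorem dirichletForm_le_multiscaleEnergy (g : ℤ →₀ ℝ) :
    ENNReal.ofReal (dirichletForm g) ≤ 9 * multiscaleEnergy g := by
  rw [dirichletForm_apply, ENNReal.ofReal_tsum_of_nonneg (fun p => by positivity)
    (summable_sub_sq_div_sub_sq g), multiscaleEnergy_eq_tsum_pairs, ← ENNReal.tsum_mul_left]
  refine ENNReal.tsum_le_tsum fun p => ?_
  rcases eq_or_ne (p.1 - p.2) 0 with hp | hp
  · simp [hp]
  obtain ⟨k, hband, hcoeff⟩ := exists_one_div_sq_le_multiscale_coefficient hp
  calc ENNReal.ofReal ((g p.1 - g p.2) ^ 2 / ((p.1 - p.2 : ℤ) : ℝ) ^ 2)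
      ≤ ENNReal.ofReal (9 * ((1 + (1 / 2) ^ k) / 9 ^ k) * (g p.1 - g p.2) ^ 2) := by
        refine ENNReal.ofReal_le_ofReal ?_
        rw [div_eq_mul_one_div, mul_comm]
        gcongr
    _ = 9 * (ENNReal.ofReal ((1 + (1 / 2) ^ k) / 9 ^ k) *
          if |p.1 - p.2| ≤ (3 ^ k : ℕ) then ENNReal.ofReal ((g p.1 - g p.2) ^ 2) else 0) := by
        rw [if_pos hband, ENNReal.ofReal_mul (by positivity), ENNReal.ofReal_mul (by norm_num),
          mul_assoc, ENNReal.ofReal_ofNat]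
    _ ≤ _ := mul_le_mul_right (ENNReal.le_tsum k) 9

theorem tsum_eq_tsum_blocks (f : ℤ → ℝ≥0∞) :
    ∑' i, f i = ∑' m : ℤ, (f (3 * m + 1) + f (3 * m + 2) + f (3 * m + 3)) := by
  let e : ℤ × Fin 3 ≃ ℤ :=
    { toFun p := 3 * p.1 + 1 + (p.2 : ℕ)
      invFun i := (blockIndex i, ⟨((i - 1) % 3).toNat, by omega⟩)
      left_inv := by rintro ⟨m, s⟩; ext <;> simp only [blockIndex] <;> omega
      right_inv i := by simp only [blockIndex]; omega }
  rw [← e.tsum_eq, ENNReal.tsum_prod']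
  refine tsum_congr fun m => ?_
  rw [tsum_fintype, Fin.sum_univ_three]
  simp [e, add_assoc]

theorem blockIndex_mul_three_add_one (m : ℤ) : blockIndex (3 * m + 1) = m := by
  rw [blockIndex]; omega

theorem blockIndex_mul_three_add_two (m : ℤ) : blockIndex (3 * m + 2) = m := by
  rw [blockIndex]; omega

theorem blockIndex_mul_three_add_three (m : ℤ) : blockIndex (3 * m + 3) = m := by
  rw [blockIndex]; omega

theorem tsum_comp_blockIndex (f : ℤ → ℝ≥0∞) : ∑' i : ℤ, f (blockIndex i) = 3 * ∑' m, f m := by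
  rw [tsum_eq_tsum_blocks, ← ENNReal.tsum_mul_left]
  refine tsum_congr fun m => ?_
  rw [blockIndex_mul_three_add_one, blockIndex_mul_three_add_two, blockIndex_mul_three_add_three]
  ring

theorem coarseningError_le (g : ℤ → ℝ) : coarseningError g ≤ 3 * gradientEnergy g := by
  rw [coarseningError, gradientEnergy, tsum_eq_tsum_blocks,
    tsum_eq_tsum_blocks fun i => ENNReal.ofReal ((g (i + 1) - g i) ^ 2), ← ENNReal.tsum_mul_left]
  refine ENNReal.tsum_le_tsum fun m => ?_
  rw [blockIndex_mul_three_add_one, blockIndex_mul_three_add_two, blockIndex_mul_three_add_three,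
    coarsen, add_assoc (3 * m) 1 1, add_assoc (3 * m) 2 1, one_add_one_eq_two,
    show (2 : ℤ) + 1 = 3 by norm_num, ← ENNReal.ofReal_ofNat 3]
  repeat rw [← ENNReal.ofReal_add (by positivity) (by positivity)]
  rw [← ENNReal.ofReal_mul (by positivity)]
  refine ENNReal.ofReal_le_ofReal ?_
  nlinarith [sq_nonneg ((g (3 * m + 3) - g (3 * m + 2)) - (g (3 * m + 2) - g (3 * m + 1))),
    sq_nonneg (g (3 * m + 3) - g (3 * m + 2)), sq_nonneg (g (3 * m + 3 + 1) - g (3 * m + 3))]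

theorem bandEnergy_one_le (g : ℤ → ℝ) : bandEnergy 1 g ≤ 2 * gradientEnergy g := by
  have hband : ∀ i : ℤ,
      (∑' j : ℤ, if |i - j| ≤ (1 : ℕ) then ENNReal.ofReal ((g i - g j) ^ 2) else 0) =
        ENNReal.ofReal ((g (i + 1) - g i) ^ 2) + ENNReal.ofReal ((g i - g (i - 1)) ^ 2) := by
    intro i
    rw [tsum_eq_sum (s := {i - 1, i, i + 1}) fun j hj => if_neg ?_,
      Finset.sum_insert (by simp; omega), Finset.sum_insert (by simp), Finset.sum_singleton]
    · simp [sub_sq_comm (g i) (g (i + 1)), add_comm]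
    · simp only [Finset.mem_insert, Finset.mem_singleton, not_or] at hj
      rw [Nat.cast_one, abs_le]
      omega
  have hshift : ∑' i : ℤ, ENNReal.ofReal ((g i - g (i - 1)) ^ 2) = gradientEnergy g := by
    rw [gradientEnergy, ← (Equiv.addRight (1 : ℤ)).tsum_eq]
    simp
  rw [bandEnergy, tsum_congr hband, ENNReal.tsum_add, hshift, ← gradientEnergy, two_mul]

theorem tsum_tsum_band (M : ℕ) (f : ℤ → ℝ≥0∞) :
    (∑' i : ℤ, ∑' j : ℤ, if |i - j| ≤ M then f i else 0) = (2 * M + 1 : ℕ) * ∑' i, f i := by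
  have hmem : ∀ i j : ℤ, |i - j| ≤ M ↔ j ∈ Finset.Icc (i - M) (i + M) := fun i j => by
    rw [abs_le, Finset.mem_Icc]
    omega
  rw [← ENNReal.tsum_mul_left]
  refine tsum_congr fun i => ?_
  simp only [hmem]
  rw [tsum_eq_sum fun j hj => if_neg hj, Finset.sum_congr rfl fun j hj => if_pos hj,
    Finset.sum_const, Int.card_Icc, nsmul_eq_mul]
  congr 2
  omega

theorem add_sub_sq_le {w : ℝ} (hw : 1 ≤ w) (a b c : ℝ) :
    (a + b - c) ^ 2 ≤ (1 + 1 / (4 * w)) * b ^ 2 + 10 * w * (a ^ 2 + c ^ 2) := by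
  have hyoung : 2 * b * (a - c) ≤ 1 / (4 * w) * b ^ 2 + 4 * w * (a - c) ^ 2 := by
    have : 0 ≤ 1 / (4 * w) * (b - 4 * w * (a - c)) ^ 2 := by positivity
    have hexpand : 1 / (4 * w) * (b - 4 * w * (a - c)) ^ 2 =
        1 / (4 * w) * b ^ 2 - 2 * b * (a - c) + 4 * w * (a - c) ^ 2 := by
      field_simp
      ring
    linarith
  nlinarith [mul_nonneg (sub_nonneg.2 hw) (sq_nonneg (a + c)), sq_nonneg (a + c),
    mul_nonneg (sub_nonneg.2 hw) (add_nonneg (sq_nonneg a) (sq_nonneg c))]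

theorem tsum_tsum_comp_blockIndex (f : ℤ → ℤ → ℝ≥0∞) :
    ∑' i, ∑' j, f (blockIndex i) (blockIndex j) = 9 * ∑' i, ∑' j, f i j := by
  simp only [tsum_comp_blockIndex (f _)]
  rw [tsum_comp_blockIndex fun i => 3 * ∑' j, f i j, ENNReal.tsum_mul_left, ← mul_assoc]
  norm_num

theorem abs_blockIndex_sub_le {M : ℕ} {i j : ℤ} (hij : |i - j| ≤ (3 * M : ℕ)) :
    |blockIndex i - blockIndex j| ≤ M := by
  rw [abs_le] at hij ⊢
  simp only [blockIndex]
  omega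

theorem ofReal_sub_sq_le_coarsen {w : ℝ} (hw : 1 ≤ w) (g : ℤ → ℝ) (i j : ℤ) :
    ENNReal.ofReal ((g i - g j) ^ 2) ≤
      ENNReal.ofReal (1 + 1 / (4 * w)) *
        ENNReal.ofReal ((coarsen g (blockIndex i) - coarsen g (blockIndex j)) ^ 2) +
      ENNReal.ofReal (10 * w) * (ENNReal.ofReal ((g i - coarsen g (blockIndex i)) ^ 2) +
        ENNReal.ofReal ((g j - coarsen g (blockIndex j)) ^ 2)) := by
  rw [← ENNReal.ofReal_add (by positivity) (by positivity), ← ENNReal.ofReal_mul (by positivity),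
    ← ENNReal.ofReal_mul (by positivity), ← ENNReal.ofReal_add (by positivity) (by positivity)]
  refine ENNReal.ofReal_le_ofReal (le_trans (le_of_eq ?_) (add_sub_sq_le hw _ _ _))
  ring

theorem bandEnergy_three_mul_le (M : ℕ) {w : ℝ} (hw : 1 ≤ w) (g : ℤ → ℝ) :
    bandEnergy (3 * M) g ≤ ENNReal.ofReal (9 * (1 + 1 / (4 * w))) * bandEnergy M (coarsen g) +
      ENNReal.ofReal (20 * w * (6 * M + 1)) * coarseningError g := by
  set err : ℤ → ℝ≥0∞ := fun i => ENNReal.ofReal ((g i - coarsen g (blockIndex i)) ^ 2)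
  have hpair : ∀ i j : ℤ,
      (if |i - j| ≤ (3 * M : ℕ) then ENNReal.ofReal ((g i - g j) ^ 2) else 0) ≤
        ENNReal.ofReal (1 + 1 / (4 * w)) * (if |blockIndex i - blockIndex j| ≤ M then
          ENNReal.ofReal ((coarsen g (blockIndex i) - coarsen g (blockIndex j)) ^ 2) else 0) +
        ENNReal.ofReal (10 * w) * ((if |i - j| ≤ (3 * M : ℕ) then err i else 0) +
          if |i - j| ≤ (3 * M : ℕ) then err j else 0) := by
    intro i j
    by_cases hij : |i - j| ≤ (3 * M : ℕ)
    · rw [if_pos hij, if_pos (abs_blockIndex_sub_le hij), if_pos hij, if_pos hij]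
      exact ofReal_sub_sq_le_coarsen hw g i j
    · rw [if_neg hij]
      exact zero_le
  have herr : (∑' i : ℤ, ∑' j : ℤ, if |i - j| ≤ (3 * M : ℕ) then err i else 0) =
      (2 * (3 * M) + 1 : ℕ) * coarseningError g := tsum_tsum_band (3 * M) err
  have herr' : (∑' i : ℤ, ∑' j : ℤ, if |i - j| ≤ (3 * M : ℕ) then err j else 0) =
      (2 * (3 * M) + 1 : ℕ) * coarseningError g := by
    rw [ENNReal.tsum_comm, ← herr]
    simp only [abs_sub_comm]
  refine (ENNReal.tsum_le_tsum fun i => ENNReal.tsum_le_tsum fun j => hpair i j).trans_eq ?_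
  simp only [ENNReal.tsum_add, ENNReal.tsum_mul_left]
  rw [tsum_tsum_comp_blockIndex fun i j =>
      if |i - j| ≤ M then ENNReal.ofReal ((coarsen g i - coarsen g j) ^ 2) else 0,
    herr, herr', ← bandEnergy, ← add_mul, ← mul_assoc, ← mul_assoc]
  congr 2
  · rw [mul_comm, ENNReal.ofReal_mul (by norm_num), ENNReal.ofReal_ofNat]
  · rw [← Nat.cast_add, ← ENNReal.ofReal_natCast, ← ENNReal.ofReal_mul (by positivity)]
    congr 1
    push_cast
    ring

theorem coarse_multiscale_coefficient_le (k : ℕ) :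
    (1 + (1 / 2) ^ (k + 1)) / 9 ^ (k + 1) * (9 * (1 + 1 / (4 * 2 ^ k))) ≤
      (1 + ((1 : ℝ) / 2) ^ k) / 9 ^ k := by
  have hhalf : ((1 : ℝ) / 2) ^ k ≤ 1 := pow_le_one₀ (by norm_num) (by norm_num)
  have hpos : (0 : ℝ) < (1 / 2) ^ k := by positivity
  have hw : 1 / (4 * 2 ^ k) = ((1 : ℝ) / 2) ^ k / 4 := by
    rw [one_div_pow]
    ring
  rw [hw, pow_succ, pow_succ, div_mul_eq_mul_div, mul_left_comm, mul_comm _ (9 : ℝ),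
    mul_div_mul_left _ _ (by norm_num : (9 : ℝ) ≠ 0)]
  gcongr
  nlinarith

theorem error_multiscale_coefficient_le (k : ℕ) :
    (1 + (1 / 2) ^ (k + 1)) / 9 ^ (k + 1) * (20 * 2 ^ k * (6 * ((3 ^ k : ℕ) : ℝ) + 1)) ≤
      70 / 3 * (2 / 3) ^ k := by
  have hhalf : ((1 : ℝ) / 2) ^ k ≤ 1 := pow_le_one₀ (by norm_num) (by norm_num)
  have hthree : (1 : ℝ) ≤ 3 ^ k := one_le_pow₀ (by norm_num)
  have hratio : ((2 : ℝ) / 3) ^ k = 2 ^ k * 3 ^ k / 9 ^ k := by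
    rw [← mul_pow, ← div_pow]
    norm_num
  calc (1 + ((1 : ℝ) / 2) ^ (k + 1)) / 9 ^ (k + 1) * (20 * 2 ^ k * (6 * ((3 ^ k : ℕ) : ℝ) + 1))
      ≤ (3 / 2) / 9 ^ (k + 1) * (20 * 2 ^ k * (7 * 3 ^ k)) := by
        push_cast
        gcongr
        · rw [pow_succ]
          linarith
        · linarith
    _ = 70 / 3 * (2 / 3) ^ k := by
        rw [hratio, pow_succ]
        field_simp
        norm_num

theorem multiscale_term_succ_le (k : ℕ) (g : ℤ → ℝ) :
    ENNReal.ofReal ((1 + (1 / 2) ^ (k + 1)) / 9 ^ (k + 1)) * bandEnergy (3 ^ (k + 1)) g ≤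
      ENNReal.ofReal ((1 + (1 / 2) ^ k) / 9 ^ k) * bandEnergy (3 ^ k) (coarsen g) +
        ENNReal.ofReal (70 / 3 * (2 / 3) ^ k) * coarseningError g := by
  have hstep := bandEnergy_three_mul_le (3 ^ k) (w := 2 ^ k) (one_le_pow₀ one_le_two) g
  rw [← pow_succ'] at hstep
  refine (mul_le_mul_right hstep _).trans ?_
  rw [mul_add, ← mul_assoc, ← mul_assoc, ← ENNReal.ofReal_mul (by positivity),
    ← ENNReal.ofReal_mul (by positivity)]
  have hcoarse := coarse_multiscale_coefficient_le k
  have herror := error_multiscale_coefficient_le k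
  gcongr

theorem multiscaleEnergy_le (g : ℤ → ℝ) :
    multiscaleEnergy g ≤ multiscaleEnergy (coarsen g) + 500 * gradientEnergy g := by
  have hgeom : ∑' k : ℕ, ENNReal.ofReal (70 / 3 * (2 / 3) ^ k) = 70 := by
    rw [← ENNReal.ofReal_tsum_of_nonneg (fun k => by positivity)
      ((summable_geometric_of_lt_one (by norm_num) (by norm_num)).mul_left _), tsum_mul_left,
      tsum_geometric_of_lt_one (by norm_num) (by norm_num)]
    norm_num
  calc multiscaleEnergy g
      = 2 * bandEnergy 1 g + ∑' k : ℕ,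
          ENNReal.ofReal ((1 + (1 / 2) ^ (k + 1)) / 9 ^ (k + 1)) * bandEnergy (3 ^ (k + 1)) g := by
        rw [multiscaleEnergy, tsum_eq_zero_add' ENNReal.summable]
        norm_num
    _ ≤ 2 * (2 * gradientEnergy g) + (multiscaleEnergy (coarsen g) + 70 * coarseningError g) := by
        gcongr
        · exact bandEnergy_one_le g
        · refine (ENNReal.tsum_le_tsum fun k => multiscale_term_succ_le k g).trans_eq ?_
          rw [ENNReal.tsum_add, ENNReal.tsum_mul_right, hgeom, multiscaleEnergy]
    _ ≤ 2 * (2 * gradientEnergy g) +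
          (multiscaleEnergy (coarsen g) + 70 * (3 * gradientEnergy g)) := by
        gcongr
        exact coarseningError_le g
    _ = multiscaleEnergy (coarsen g) + 214 * gradientEnergy g := by ring
    _ ≤ _ := by gcongr; norm_num

end MultiscaleEnergy

section Triadic

open scoped ENNReal

/-- The index set of `L` hierarchical scales: one new site `root`, and three sites `child m 0`,
`child m 1`, `child m 2` for every site `m` of the remaining `L - 1` scales. -/
inductive TriadicIndex : ℕ → Type
  | root {L : ℕ} : TriadicIndex (L + 1)
  | child {L : ℕ} (m : TriadicIndex L) (s : Fin 3) : TriadicIndex (L + 1)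
  deriving DecidableEq

namespace TriadicIndex

instance : IsEmpty (TriadicIndex 0) :=
  ⟨nofun⟩

/-- The decomposition of `L + 1` scales into the root and the children of `L` scales. -/
def succEquiv (L : ℕ) : TriadicIndex (L + 1) ≃ Option (TriadicIndex L × Fin 3) where
  toFun
    | root => none
    | child m s => some (m, s)
  invFun
    | none => root
    | some (m, s) => child m s
  left_inv := by rintro (_ | _) <;> rfl
  right_inv := by rintro (_ | _) <;> rfl

instance instFintype : (L : ℕ) → Fintype (TriadicIndex L)
  | 0 => .ofIsEmpty
  | L + 1 => letI := instFintype L; .ofEquiv _ (succEquiv L).symm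

variable {L : ℕ}

@[to_additive]
theorem prod_succ {M : Type*} [CommMonoid M] (f : TriadicIndex (L + 1) → M) :
    ∏ t, f t = f root * ∏ m : TriadicIndex L, ∏ s : Fin 3, f (child m s) := by
  rw [← (succEquiv L).symm.prod_comp, Fintype.prod_option, Fintype.prod_prod_type]
  rfl

/-- The location of an index on the half-line: the children of the site at `p` form the block
`{3p + 1, 3p + 2, 3p + 3}`, and the root is placed at `0`. -/
def position : {L : ℕ} → TriadicIndex L → ℕ
  | _, root => 0
  | _, child m s => 3 * position m + 1 + s

theorem position_root : (root : TriadicIndex (L + 1)).position = 0 :=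
  rfl

theorem position_child (m : TriadicIndex L) (s : Fin 3) :
    (child m s).position = 3 * m.position + 1 + s :=
  rfl

theorem position_injective : ∀ {L : ℕ}, Function.Injective (position (L := L))
  | 0 => Function.injective_of_subsingleton _
  | L + 1 => by
    rintro (_ | ⟨m, s⟩) (_ | ⟨m', s'⟩) h
    · rfl
    · rw [position_root, position_child] at h
      omega
    · rw [position_root, position_child] at h
      omega
    · rw [position_child, position_child] at h
      rw [position_injective (show position m = position m' by omega), show s = s' by omega]

theorem two_mul_position_add_three_le : ∀ {L : ℕ} (t : TriadicIndex L), 2 * position t + 3 ≤ 3 ^ L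
  | L + 1, root => by
    rw [position_root, pow_succ]
    have : 0 < 3 ^ L := by positivity
    omega
  | L + 1, child m s => by
    have := two_mul_position_add_three_le m
    rw [position_child, pow_succ]
    omega

end TriadicIndex

open TriadicIndex

section Profile

variable (R : Type*) [CommRing R] {L : ℕ}

/-- Coarse increments, obtained by adding up the increments in every triple of sites. -/
def tripleSum : (TriadicIndex (L + 1) → R) →ₗ[R] (TriadicIndex L → R) :=
  LinearMap.pi fun m => ∑ s : Fin 3, LinearMap.proj (child m s)

theorem tripleSum_apply (η : TriadicIndex (L + 1) → R) (m : TriadicIndex L) :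
    tripleSum R η m = ∑ s : Fin 3, η (child m s) := by
  simp [tripleSum]

/-- The distance to the origin after folding `ℤ` onto `ℕ` at `-1/2`, so that `-1 - n` and `n` are
identified. -/
def foldToNat (i : ℤ) : ℕ :=
  (max i (-1 - i)).toNat

/-- The symmetric field on `ℤ` with increments `η`: its height at `n` and at `-1 - n` is the sum of
the `η t` over all positions beyond `n`. -/
def profile : (TriadicIndex L → R) →ₗ[R] (ℤ → R) :=
  LinearMap.pi fun i => ∑ t with foldToNat i ≤ position t, LinearMap.proj t

theorem profile_apply (η : TriadicIndex L → R) (i : ℤ) :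
    profile R η i = ∑ t with foldToNat i ≤ position t, η t := by
  simp [profile]

theorem profile_sub_profile_of_foldToNat_succ (η : TriadicIndex L → R) {i j : ℤ}
    (h : foldToNat j = foldToNat i + 1) :
    profile R η i - profile R η j = ∑ t with position t = foldToNat i, η t := by
  simp only [profile_apply, Finset.sum_filter, ← Finset.sum_sub_distrib, h]
  refine Finset.sum_congr rfl fun t _ => ?_
  split_ifs <;> first | omega | simp

theorem profile_zero (η : TriadicIndex L → R) : profile R η 0 = ∑ t, η t := by
  simp [profile_apply, foldToNat]

theorem profile_injective : Function.Injective (profile R (L := L)) := by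
  rw [← LinearMap.ker_eq_bot, LinearMap.ker_eq_bot']
  intro η hη
  funext t
  have hjump := profile_sub_profile_of_foldToNat_succ R η (i := position t) (j := position t + 1)
    (by simp only [foldToNat]; omega)
  rw [hη, show foldToNat (position t) = position t by simp only [foldToNat]; omega] at hjump
  simpa [position_injective.eq_iff, Finset.filter_eq'] using hjump.symm

theorem profile_eq_zero {N : ℕ} (hL : 3 ^ L ≤ 2 * N + 1) (η : TriadicIndex L → R) {i : ℤ}
    (hi : i ∉ Finset.Icc (-N : ℤ) N) : profile R η i = 0 := by
  rw [profile_apply, Finset.filter_false_of_mem, Finset.sum_empty]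
  intro t _
  have := two_mul_position_add_three_le t
  rw [Finset.mem_Icc] at hi
  simp only [foldToNat]
  omega

theorem latticeInclusion_tripleSum (η : TriadicIndex (L + 1) → ℤ) :
    latticeInclusion _ (tripleSum ℤ η) = tripleSum ℝ (latticeInclusion _ η) := by
  ext m
  simp [tripleSum_apply]

end Profile

variable {L : ℕ}

theorem coarsen_profile (η : TriadicIndex (L + 1) → ℝ) :
    coarsen (profile ℝ η) = profile ℝ (tripleSum ℝ η) := by
  ext i
  rw [coarsen, profile_apply, profile_apply, Finset.sum_filter, Finset.sum_filter,
    TriadicIndex.sum_succ, if_neg, zero_add]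
  · refine Finset.sum_congr rfl fun m _ => ?_
    have hiff : ∀ s : Fin 3, foldToNat (3 * i + 1) ≤ (child m s).position ↔
        foldToNat i ≤ position m := fun s => by
      rw [position_child]
      simp only [foldToNat]
      omega
    simp only [hiff, tripleSum_apply, Finset.sum_ite_irrel, Finset.sum_const_zero]
  · rw [position_root]
    simp only [foldToNat]
    omega

theorem tsum_sq_sum_fiber {T : Type*} [Fintype T] {p : T → ℕ} (hp : Function.Injective p)
    (η : T → ℝ) : ∑' n : ℕ, ENNReal.ofReal ((∑ t with p t = n, η t) ^ 2) =
      ∑ t, ENNReal.ofReal (η t ^ 2) := by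
  rw [← hp.tsum_eq, tsum_fintype]
  · refine Finset.sum_congr rfl fun t _ => ?_
    rw [Finset.sum_filter, Finset.sum_eq_single_of_mem t (Finset.mem_univ t), if_pos rfl]
    exact fun u _ hu => if_neg (hp.ne hu)
  · refine Function.support_subset_iff'.2 fun n hn => ?_
    rw [Finset.filter_false_of_mem fun t _ h => hn ⟨t, h⟩]
    simp

theorem gradientEnergy_profile (η : TriadicIndex L → ℝ) :
    gradientEnergy (profile ℝ η) = 2 * ∑ t, ENNReal.ofReal (η t ^ 2) := by
  have hright : ∀ n : ℕ, (profile ℝ η (n + 1) - profile ℝ η n) ^ 2 =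
      (∑ t with position t = n, η t) ^ 2 := fun n => by
    rw [sub_sq_comm, profile_sub_profile_of_foldToNat_succ ℝ η (by simp only [foldToNat]; omega),
      show foldToNat n = n by simp only [foldToNat]; omega]
  have hleft : ∀ n : ℕ, (profile ℝ η (-((n + 1 : ℕ) + 1) + 1) -
      profile ℝ η (-((n + 1 : ℕ) + 1))) ^ 2 = (∑ t with position t = n, η t) ^ 2 := fun n => by
    rw [profile_sub_profile_of_foldToNat_succ ℝ η (by simp only [foldToNat]; omega),
      show foldToNat (-((n + 1 : ℕ) + 1) + 1) = n by simp only [foldToNat]; omega]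
  have hcenter : profile ℝ η (-((0 : ℕ) + 1) + 1) - profile ℝ η (-((0 : ℕ) + 1)) = 0 := by
    simp [profile_apply, foldToNat]
  rw [gradientEnergy, tsum_of_nat_of_neg_add_one ENNReal.summable ENNReal.summable,
    tsum_eq_zero_add' (f := fun n : ℕ => ENNReal.ofReal ((profile ℝ η (-(n + 1) + 1) - _) ^ 2))
      ENNReal.summable, hcenter]
  simp only [hright, hleft, tsum_sq_sum_fiber position_injective]
  simp [two_mul]

/-- The hierarchical energy, with `∑ (η t)²` at the finest scale and the energy of the triple sums
on the remaining scales. -/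
noncomputable def hierarchicalEnergy : (L : ℕ) → QuadraticForm ℝ (TriadicIndex L → ℝ)
  | 0 => 0
  | L + 1 => ∑ t, QuadraticMap.sq.comp (LinearMap.proj t) +
      (hierarchicalEnergy L).comp (tripleSum ℝ)

theorem hierarchicalEnergy_succ (η : TriadicIndex (L + 1) → ℝ) :
    hierarchicalEnergy (L + 1) η = ∑ t, η t ^ 2 + hierarchicalEnergy L (tripleSum ℝ η) := by
  simp [hierarchicalEnergy, sq]

theorem hierarchicalEnergy_nonneg : ∀ {L : ℕ} (η : TriadicIndex L → ℝ), 0 ≤ hierarchicalEnergy L η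
  | 0, _ => le_rfl
  | L + 1, η => by
    rw [hierarchicalEnergy_succ]
    have := hierarchicalEnergy_nonneg (tripleSum ℝ η)
    positivity

theorem multiscaleEnergy_profile_le : ∀ {L : ℕ} (η : TriadicIndex L → ℝ),
    multiscaleEnergy (profile ℝ η) ≤ 1000 * ENNReal.ofReal (hierarchicalEnergy L η)
  | 0, η => by
    simp [Subsingleton.elim η 0, multiscaleEnergy, bandEnergy]
  | L + 1, η => by
    calc multiscaleEnergy (profile ℝ η)
        ≤ multiscaleEnergy (coarsen (profile ℝ η)) + 500 * gradientEnergy (profile ℝ η) :=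
          multiscaleEnergy_le _
      _ = multiscaleEnergy (profile ℝ (tripleSum ℝ η)) +
            1000 * ∑ t, ENNReal.ofReal (η t ^ 2) := by
          rw [coarsen_profile, gradientEnergy_profile, ← mul_assoc]
          norm_num
      _ ≤ 1000 * ENNReal.ofReal (hierarchicalEnergy L (tripleSum ℝ η)) +
            1000 * ∑ t, ENNReal.ofReal (η t ^ 2) := by
          gcongr
          exact multiscaleEnergy_profile_le _
      _ = 1000 * ENNReal.ofReal (hierarchicalEnergy (L + 1) η) := by
          rw [hierarchicalEnergy_succ, ENNReal.ofReal_add (by positivity)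
            (hierarchicalEnergy_nonneg _), ENNReal.ofReal_sum_of_nonneg fun _ _ => by positivity]
          ring

/-- The symmetric field with given increments, as a field on the sites `{-N, …, N}`. -/
def chainProfile (R : Type*) [CommRing R] (L N : ℕ) :
    (TriadicIndex L → R) →ₗ[R] (Finset.Icc (-N : ℤ) N → R) :=
  LinearMap.funLeft R R Subtype.val ∘ₗ profile R

theorem chainProfile_chainOrigin (R : Type*) [CommRing R] (N : ℕ) (η : TriadicIndex L → R) :
    chainProfile R L N η (chainOrigin N) = ∑ t, η t :=
  profile_zero R η

theorem chainProfile_injective (R : Type*) [CommRing R] {N : ℕ} (hL : 3 ^ L ≤ 2 * N + 1) :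
    Function.Injective (chainProfile R L N) := by
  intro η η' h
  refine profile_injective R (funext fun i => ?_)
  by_cases hi : i ∈ Finset.Icc (-N : ℤ) N
  · exact congrFun h ⟨i, hi⟩
  · rw [profile_eq_zero R hL _ hi, profile_eq_zero R hL _ hi]

theorem latticeInclusion_chainProfile (N : ℕ) (η : TriadicIndex L → ℤ) :
    latticeInclusion _ (chainProfile ℤ L N η) = chainProfile ℝ L N (latticeInclusion _ η) := by
  ext i
  simp [chainProfile, LinearMap.funLeft_apply, profile_apply]

theorem chainForm_chainProfile_le {β : ℝ} (hβ : 0 ≤ β) {N : ℕ} (hL : 3 ^ L ≤ 2 * N + 1)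
    (η : TriadicIndex L → ℝ) :
    chainForm β N (chainProfile ℝ L N η) ≤ 9000 * β * hierarchicalEnergy L η := by
  have hextend : ⇑(extendByZero _ (chainProfile ℝ L N η)) = profile ℝ η := by
    ext i
    by_cases hi : i ∈ Finset.Icc (-N : ℤ) N
    · exact extendByZero_apply_coe _ ⟨i, hi⟩
    · rw [extendByZero_apply_of_notMem _ hi, profile_eq_zero ℝ hL η hi]
  have hdirichlet := dirichletForm_le_multiscaleEnergy (extendByZero _ (chainProfile ℝ L N η))
  rw [hextend] at hdirichlet
  have henergy := hdirichlet.trans (mul_le_mul_right (multiscaleEnergy_profile_le η) 9)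
  rw [← mul_assoc, show (9 : ℝ≥0∞) * 1000 = ENNReal.ofReal 9000 by norm_num,
    ← ENNReal.ofReal_mul (by norm_num), ENNReal.ofReal_le_ofReal_iff
      (mul_nonneg (by norm_num) (hierarchicalEnergy_nonneg _))] at henergy
  rw [chainForm_apply, mul_comm 9000 β, mul_assoc]
  gcongr

end Triadic

section HierarchicalWeights

open TriadicIndex

variable {L : ℕ}

/-- The weight on increments that penalises the increments at the finest scale by `v`, and those of
the triple sums at each coarser scale by `f`. -/
def hierarchicalWeight (f : ℤ → ℝ) : (v : ℤ → ℝ) → (L : ℕ) → (TriadicIndex L → ℤ) → ℝ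
  | _, 0, _ => 1
  | v, L + 1, η => (∏ t, v (η t)) * hierarchicalWeight f f L (tripleSum ℤ η)

theorem hierarchicalWeight_succ (f v : ℤ → ℝ) (η : TriadicIndex (L + 1) → ℤ) :
    hierarchicalWeight f v (L + 1) η = (∏ t, v (η t)) * hierarchicalWeight f f L (tripleSum ℤ η) :=
  rfl

theorem hierarchicalWeight_mul (f v w : ℤ → ℝ) (η : TriadicIndex L → ℤ) :
    hierarchicalWeight f (fun n => w n * v n) L η =
      (∏ t, v (η t)) * hierarchicalWeight f w L η := by
  cases L with
  | zero => simp [hierarchicalWeight]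
  | succ L =>
    rw [hierarchicalWeight_succ, hierarchicalWeight_succ, Finset.prod_mul_distrib]
    ring

theorem isPositiveDefinite_hierarchicalWeight {f : ℤ → ℝ} (hf : IsPositiveDefinite f) :
    ∀ {v : ℤ → ℝ} {L : ℕ}, IsPositiveDefinite v → IsPositiveDefinite (hierarchicalWeight f v L)
  | _, 0, _ => .one
  | _, _ + 1, hv =>
    (IsPositiveDefinite.prod fun t _ =>
        hv.comp_addMonoidHom (Pi.evalAddMonoidHom (fun _ => ℤ) t)).mul
      ((isPositiveDefinite_hierarchicalWeight hf hf).comp_addMonoidHom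
        (tripleSum ℤ).toAddMonoidHom)

theorem exp_neg_hierarchicalEnergy_mul_hierarchicalWeight (b : ℝ) (f : ℤ → ℝ) :
    ∀ {L : ℕ} (η : TriadicIndex L → ℤ),
      Real.exp (-(b * hierarchicalEnergy L (latticeInclusion _ η))) * hierarchicalWeight f f L η =
        hierarchicalWeight (fun n => Real.exp (-(b * (n : ℝ) ^ 2)) * f n)
          (fun n => Real.exp (-(b * (n : ℝ) ^ 2)) * f n) L η
  | 0, η => by simp [hierarchicalWeight, hierarchicalEnergy]
  | L + 1, η => by
    rw [hierarchicalWeight_succ, hierarchicalWeight_succ,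
      ← exp_neg_hierarchicalEnergy_mul_hierarchicalWeight b f (tripleSum ℤ η),
      hierarchicalEnergy_succ, latticeInclusion_tripleSum, Finset.prod_mul_distrib, ← Real.exp_sum,
      mul_add, neg_add, Real.exp_add, Finset.mul_sum, Finset.sum_neg_distrib]
    simp only [AddMonoidHom.compLeft_apply, Function.comp_apply, Int.coe_castAddHom]
    ring

/-- The finite set of the fields with values in `{-1, 0, 1}`. -/
noncomputable abbrev unitBox (T : Type*) [Fintype T] [DecidableEq T] : Finset (T → ℤ) :=
  Fintype.piFinset fun _ => Finset.Icc (-1) 1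

theorem hierarchicalWeight_eq_zero {v : ℤ → ℝ} (hv : ∀ n ∉ Finset.Icc (-1 : ℤ) 1, v n = 0)
    (f : ℤ → ℝ) {η : TriadicIndex L → ℤ} (hη : η ∉ unitBox (TriadicIndex L)) :
    hierarchicalWeight f v L η = 0 := by
  obtain ⟨t, ht⟩ := not_forall.1 (Fintype.mem_piFinset.not.1 hη)
  cases L with
  | zero => exact isEmptyElim t
  | succ L =>
    rw [hierarchicalWeight_succ, Finset.prod_eq_zero (Finset.mem_univ t) (hv _ ht), zero_mul]

/-- The triples of numbers in `{-1, 0, 1}`. -/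
noncomputable abbrev unitTriples : Finset (ℤ × ℤ × ℤ) :=
  Finset.Icc (-1) 1 ×ˢ Finset.Icc (-1) 1 ×ˢ Finset.Icc (-1) 1

/-- The threefold convolution of the restriction of `v` to `{-1, 0, 1}`. -/
noncomputable def tripleConvolution (v : ℤ → ℝ) (n : ℤ) : ℝ :=
  ∑ p ∈ unitTriples with p.1 + p.2.1 + p.2.2 = n, v p.1 * v p.2.1 * v p.2.2

/-- A field on `L + 1` scales consists of its value at the root and one triple for each site of the
remaining `L` scales. -/
def fieldSuccEquiv (L : ℕ) :
    (TriadicIndex (L + 1) → ℤ) ≃ ℤ × (TriadicIndex L → ℤ × ℤ × ℤ) where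
  toFun η := (η root, fun m => (η (child m 0), η (child m 1), η (child m 2)))
  invFun p
    | root => p.1
    | child m s => ![(p.2 m).1, (p.2 m).2.1, (p.2 m).2.2] s
  left_inv η := by
    ext (_ | ⟨m, s⟩)
    · rfl
    · fin_cases s <;> rfl
  right_inv _ := rfl

theorem sum_piFinset_mul_comp {M X Y : Type*} [Fintype M] [DecidableEq M] [DecidableEq Y]
    (P : Finset X) (S : Finset Y) (π : X → Y) (w : X → ℝ) {G : (M → Y) → ℝ}
    (hG : ∀ ζ ∉ Fintype.piFinset fun _ => S, G ζ = 0) :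
    ∑ Θ ∈ Fintype.piFinset fun _ => P, (∏ m, w (Θ m)) * G (π ∘ Θ) =
      ∑ ζ ∈ Fintype.piFinset fun _ => S, (∏ m, ∑ x ∈ P with π x = ζ m, w x) * G ζ := by
  have hfiber : ∀ ζ : M → Y, Fintype.piFinset (fun m => P.filter fun x => π x = ζ m) =
      (Fintype.piFinset fun _ => P).filter fun Θ => π ∘ Θ = ζ := fun ζ => by
    ext Θ
    simp [Fintype.mem_piFinset, forall_and, funext_iff]
  simp only [Finset.prod_univ_sum, Finset.sum_mul, hfiber]
  rw [Finset.sum_comm' (t' := Fintype.piFinset fun _ => P)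
    (s' := fun Θ => (Fintype.piFinset fun _ => S).filter fun ζ => π ∘ Θ = ζ)
    (by simp only [Finset.mem_filter]; tauto)]
  refine Finset.sum_congr rfl fun Θ _ => ?_
  rw [Finset.sum_filter, Finset.sum_ite_eq]
  split_ifs with h
  · rfl
  · rw [hG _ h, mul_zero]

theorem sum_unitBox_succ (A : ℤ → (TriadicIndex L → ℤ × ℤ × ℤ) → ℝ) :
    ∑ η ∈ unitBox (TriadicIndex (L + 1)),
        A (η root) (fun m => (η (child m 0), η (child m 1), η (child m 2))) =
      ∑ n ∈ Finset.Icc (-1) 1, ∑ Θ ∈ Fintype.piFinset fun _ => unitTriples, A n Θ := by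
  rw [← Finset.sum_product']
  refine Finset.sum_equiv (fieldSuccEquiv L) (fun η => ?_) fun η _ => rfl
  simp only [Fintype.mem_piFinset, Finset.mem_product, fieldSuccEquiv]
  refine ⟨fun h => ⟨h _, fun m => ⟨h _, h _, h _⟩⟩, fun h t => ?_⟩
  obtain _ | ⟨m, s⟩ := t
  · exact h.1
  · fin_cases s
    exacts [(h.2 m).1, (h.2 m).2.1, (h.2 m).2.2]

/-- The integral of `Φ (∑ t, η t)` against the hierarchical weight restricted to the unit box. -/
noncomputable def hierarchicalSum (f v : ℤ → ℝ) (L : ℕ) (Φ : ℤ → ℝ) : ℝ :=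
  ∑ η ∈ unitBox (TriadicIndex L), Φ (∑ t, η t) * hierarchicalWeight f v L η

-- Summing out the finest scale convolves its weights within each triple.
theorem hierarchicalSum_succ {f : ℤ → ℝ} (hf : ∀ n ∉ Finset.Icc (-1 : ℤ) 1, f n = 0) (v : ℤ → ℝ)
    (L : ℕ) (Φ : ℤ → ℝ) :
    hierarchicalSum f v (L + 1) Φ = ∑ n ∈ Finset.Icc (-1) 1,
      v n * hierarchicalSum f (fun k => f k * tripleConvolution v k) L fun x => Φ (n + x) := by
  let total : ℤ × ℤ × ℤ → ℤ := fun p => p.1 + p.2.1 + p.2.2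
  let G : ℤ → (TriadicIndex L → ℤ) → ℝ := fun n ζ =>
    Φ (n + ∑ m, ζ m) * hierarchicalWeight f f L ζ
  have hG : ∀ n, ∀ ζ ∉ unitBox (TriadicIndex L), G n ζ = 0 := fun n ζ hζ => by
    simp only [G, hierarchicalWeight_eq_zero hf f hζ, mul_zero]
  calc hierarchicalSum f v (L + 1) Φ
      = ∑ n ∈ Finset.Icc (-1) 1, ∑ Θ ∈ Fintype.piFinset fun _ => unitTriples,
          v n * ((∏ m, v (Θ m).1 * v (Θ m).2.1 * v (Θ m).2.2) * G n (total ∘ Θ)) := by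
        rw [← sum_unitBox_succ, hierarchicalSum]
        refine Finset.sum_congr rfl fun η _ => ?_
        rw [TriadicIndex.sum_succ, hierarchicalWeight_succ, prod_succ]
        have htriple : tripleSum ℤ η =
            total ∘ fun m => (η (child m 0), η (child m 1), η (child m 2)) := by
          ext m
          rw [tripleSum_apply, Fin.sum_univ_three]
          rfl
        simp only [Fin.prod_univ_three, G, ← htriple, tripleSum_apply]
        ring
    _ = ∑ n ∈ Finset.Icc (-1) 1, v n * ∑ ζ ∈ unitBox (TriadicIndex L),
          (∏ m, tripleConvolution v (ζ m)) * G n ζ := by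
        refine Finset.sum_congr rfl fun n _ => ?_
        rw [← Finset.mul_sum, sum_piFinset_mul_comp unitTriples _ total
          (fun p => v p.1 * v p.2.1 * v p.2.2) (hG n)]
        rfl
    _ = _ := by
        simp only [hierarchicalSum, hierarchicalWeight_mul, G, mul_left_comm]

end HierarchicalWeights

section StepWeights

/-- The weight on `ℤ` with mass `a` at `0` and mass `c` at `±1`. -/
noncomputable def stepWeight (a c : ℝ) (n : ℤ) : ℝ :=
  if n = 0 then a else if n.natAbs = 1 then c else 0

theorem stepWeight_zero (a c : ℝ) : stepWeight a c 0 = a :=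
  if_pos rfl

theorem stepWeight_one (a c : ℝ) : stepWeight a c 1 = c := by
  simp [stepWeight]

theorem stepWeight_neg_one (a c : ℝ) : stepWeight a c (-1) = c := by
  simp [stepWeight]

theorem stepWeight_eq_zero (a c : ℝ) {n : ℤ} (hn : n ∉ Finset.Icc (-1 : ℤ) 1) :
    stepWeight a c n = 0 := by
  rw [Finset.mem_Icc] at hn
  rw [stepWeight, if_neg (by omega), if_neg (by omega)]

theorem sum_Icc_neg_one_one (f : ℤ → ℝ) :
    ∑ n ∈ Finset.Icc (-1) 1, f n = f (-1) + f 0 + f 1 := by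
  rw [show Finset.Icc (-1 : ℤ) 1 = {-1, 0, 1} by decide]
  simp [add_assoc]

theorem stepWeight_mul_tripleConvolution (a c q : ℝ) :
    (fun n => stepWeight 1 (q / 2) n * tripleConvolution (stepWeight a c) n) =
      stepWeight (a ^ 3 + 6 * a * c ^ 2) (q / 2 * (3 * a ^ 2 * c + 3 * c ^ 3)) := by
  ext n
  by_cases hn : n ∈ Finset.Icc (-1 : ℤ) 1
  · rw [tripleConvolution, Finset.sum_filter]
    simp only [Finset.sum_product, sum_Icc_neg_one_one]
    rw [Finset.mem_Icc] at hn
    obtain rfl | rfl | rfl : n = -1 ∨ n = 0 ∨ n = 1 := by omega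
    all_goals
      norm_num only [stepWeight_zero, stepWeight_one, stepWeight_neg_one, if_true, if_false]
      ring
  · rw [stepWeight_eq_zero _ _ hn, stepWeight_eq_zero _ _ hn, zero_mul]

theorem isPositiveDefinite_stepWeight : IsPositiveDefinite (stepWeight 1 (1 / 2)) := by
  -- `stepWeight 1 (1 / 2)` is half the autocorrelation of the indicator of `{0, 1}`
  let g : ℤ → ℤ → ℝ := fun k i => if i = k ∨ i = k + 1 then 1 else 0
  refine posSemidef_of_hasSum (K := fun k => (1 / 2 : ℝ) • Matrix.of fun i j => g k i * g k j)
    (fun k => (posSemidef_rankOne (g k)).smul (by norm_num)) fun i j => ?_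
  have hsum : stepWeight 1 (1 / 2) (i - j) = ∑ k ∈ {i - 1, i}, 1 / 2 * (g k i * g k j) := by
    have hleft : g (i - 1) i = 1 := if_pos (by omega)
    have hright : g i i = 1 := if_pos (by omega)
    rw [Finset.sum_pair (by omega), hleft, hright]
    simp only [stepWeight, g]
    split_ifs <;> first | omega | norm_num
  simp only [Matrix.of_apply, hsum]
  refine hasSum_sum_of_ne_finset_zero fun k hk => ?_
  simp only [Finset.mem_insert, Finset.mem_singleton, not_or] at hk
  simp only [Matrix.smul_apply, Matrix.of_apply, smul_eq_mul, g]
  rw [if_neg (by omega), zero_mul, mul_zero]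

theorem exp_neg_sq_mul_stepWeight (b : ℝ) :
    (fun n : ℤ => Real.exp (-(b * (n : ℝ) ^ 2)) * stepWeight 1 (1 / 2) n) =
      stepWeight 1 (Real.exp (-b) / 2) := by
  ext n
  by_cases hn : n ∈ Finset.Icc (-1 : ℤ) 1
  · rw [Finset.mem_Icc] at hn
    obtain rfl | rfl | rfl : n = -1 ∨ n = 0 ∨ n = 1 := by omega
    all_goals simp [stepWeight, div_eq_mul_inv]
  · rw [stepWeight_eq_zero _ _ hn, stepWeight_eq_zero _ _ hn, mul_zero]

/-- The hierarchical sum whose finest scale has masses `a` and `c` and whose coarser scales have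
masses `1` and `q / 2`. -/
noncomputable def stepSum (q : ℝ) (L : ℕ) (a c : ℝ) (Φ : ℤ → ℝ) : ℝ :=
  hierarchicalSum (stepWeight 1 (q / 2)) (stepWeight a c) L Φ

section

variable (q : ℝ) (L : ℕ) (a c : ℝ)

theorem stepSum_zero (Φ : ℤ → ℝ) : stepSum q 0 a c Φ = Φ 0 := by
  simp [stepSum, hierarchicalSum, hierarchicalWeight, unitBox]

theorem stepSum_add (Φ Ψ : ℤ → ℝ) :
    stepSum q L a c (fun x => Φ x + Ψ x) = stepSum q L a c Φ + stepSum q L a c Ψ := by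
  simp only [stepSum, hierarchicalSum, add_mul, Finset.sum_add_distrib]

theorem stepSum_succ (Φ : ℤ → ℝ) :
    stepSum q (L + 1) a c Φ =
      a * stepSum q L (a ^ 3 + 6 * a * c ^ 2) (q / 2 * (3 * a ^ 2 * c + 3 * c ^ 3)) Φ +
      c * stepSum q L (a ^ 3 + 6 * a * c ^ 2) (q / 2 * (3 * a ^ 2 * c + 3 * c ^ 3))
        (fun x => Φ (-1 + x) + Φ (1 + x)) := by
  rw [stepSum_add]
  simp only [stepSum, hierarchicalSum_succ fun _ => stepWeight_eq_zero 1 (q / 2),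
    stepWeight_mul_tripleConvolution, sum_Icc_neg_one_one]
  simp only [stepWeight_zero, stepWeight_one, stepWeight_neg_one, zero_add]
  ring

theorem stepSum_succ_one :
    stepSum q (L + 1) a c (fun _ => 1) = (a + 2 * c) *
      stepSum q L (a ^ 3 + 6 * a * c ^ 2) (q / 2 * (3 * a ^ 2 * c + 3 * c ^ 3)) fun _ => 1 := by
  rw [stepSum_succ, stepSum_add]
  ring

theorem stepSum_succ_sq :
    stepSum q (L + 1) a c (fun x => (x : ℝ) ^ 2) =
      (a + 2 * c) * stepSum q L (a ^ 3 + 6 * a * c ^ 2) (q / 2 * (3 * a ^ 2 * c + 3 * c ^ 3))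
        (fun x => (x : ℝ) ^ 2) +
      2 * c * stepSum q L (a ^ 3 + 6 * a * c ^ 2) (q / 2 * (3 * a ^ 2 * c + 3 * c ^ 3))
        fun _ => 1 := by
  have hsquares : (fun x : ℤ => ((-1 + x : ℤ) : ℝ) ^ 2 + ((1 + x : ℤ) : ℝ) ^ 2) =
      fun x : ℤ => ((x : ℝ) ^ 2 + (x : ℝ) ^ 2) + (1 + 1) := by
    ext x
    push_cast
    ring
  rw [stepSum_succ, hsquares]
  simp only [stepSum_add]
  ring

end

variable {q a c : ℝ}

theorem tenth_mul_coarseMass_le (hq : 0.95 ≤ q) (ha : 0 < a) (hac : a / 10 ≤ c) :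
    (a ^ 3 + 6 * a * c ^ 2) / 10 ≤ q / 2 * (3 * a ^ 2 * c + 3 * c ^ 3) := by
  have hc : 0 < c := by linarith
  have hquadratic : 0 ≤ c * (0.425 * a ^ 2 - 0.6 * a * c + 1.425 * c ^ 2) :=
    mul_nonneg hc.le (by nlinarith [sq_nonneg (a - c), sq_nonneg a, sq_nonneg c])
  have hratio : 0 ≤ a ^ 2 * (c - a / 10) := mul_nonneg (by positivity) (by linarith)
  calc (a ^ 3 + 6 * a * c ^ 2) / 10
      ≤ 0.95 / 2 * (3 * a ^ 2 * c + 3 * c ^ 3) := by linarith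
    _ ≤ q / 2 * (3 * a ^ 2 * c + 3 * c ^ 3) := by gcongr

theorem coarseStepMass_le (hq : q ≤ 1) (ha : 0 < a) (hc : 0 < c) (hca : c ≤ a) :
    q / 2 * (3 * a ^ 2 * c + 3 * c ^ 3) ≤ a ^ 3 + 6 * a * c ^ 2 := by
  have hquadratic : 0 ≤ a * (a ^ 2 - 1.5 * a * c + 4.5 * c ^ 2) :=
    mul_nonneg ha.le (by nlinarith [sq_nonneg (a - c)])
  have hratio : 0 ≤ c ^ 2 * (a - c) := mul_nonneg (by positivity) (by linarith)
  calc q / 2 * (3 * a ^ 2 * c + 3 * c ^ 3)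
      ≤ 1 / 2 * (3 * a ^ 2 * c + 3 * c ^ 3) := by gcongr
    _ ≤ a ^ 3 + 6 * a * c ^ 2 := by linarith

theorem stepSum_one_pos (hq : 0 < q) : ∀ {L : ℕ} {a c : ℝ}, 0 < a → 0 < c →
    0 < stepSum q L a c fun _ => 1
  | 0, _, _, _, _ => by
    rw [stepSum_zero]
    exact one_pos
  | L + 1, a, c, ha, hc => by
    rw [stepSum_succ_one]
    have := stepSum_one_pos hq (L := L) (a := a ^ 3 + 6 * a * c ^ 2)
      (c := q / 2 * (3 * a ^ 2 * c + 3 * c ^ 3)) (by positivity) (by positivity)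
    positivity

-- For `q` near `1` the cone `a / 10 ≤ c ≤ a` is invariant under coarse-graining, so that every
-- scale contributes a fixed amount to the variance.
theorem mul_stepSum_one_le_stepSum_sq (hq : 0.95 ≤ q) (hq1 : q ≤ 1) :
    ∀ {L : ℕ} {a c : ℝ}, 0 < a → a / 10 ≤ c → c ≤ a →
      L / 6 * stepSum q L a c (fun _ => 1) ≤ stepSum q L a c fun x => (x : ℝ) ^ 2
  | 0, _, _, _, _, _ => by simp [stepSum_zero]
  | L + 1, a, c, ha, hac, hca => by
    have hc : 0 < c := by linarith
    have ih := mul_stepSum_one_le_stepSum_sq hq hq1 (L := L) (by positivity)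
      (tenth_mul_coarseMass_le hq ha hac) (coarseStepMass_le hq1 ha hc hca)
    have hpos := stepSum_one_pos (show 0 < q by linarith) (L := L)
      (a := a ^ 3 + 6 * a * c ^ 2) (c := q / 2 * (3 * a ^ 2 * c + 3 * c ^ 3)) (by positivity)
      (mul_pos (by linarith) (by positivity))
    rw [stepSum_succ_one, stepSum_succ_sq]
    set mass := stepSum q L (a ^ 3 + 6 * a * c ^ 2) (q / 2 * (3 * a ^ 2 * c + 3 * c ^ 3)) fun _ => 1
    calc ((L + 1 : ℕ) : ℝ) / 6 * ((a + 2 * c) * mass)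
        = (a + 2 * c) * (L / 6 * mass) + (a + 2 * c) / 6 * mass := by push_cast; ring
      _ ≤ _ := by gcongr; linarith

end StepWeights

section LowerBound

variable {β : ℝ} {L N : ℕ}

/-- The positive definite function that restricts the chain to the symmetric fields with increments
of hierarchical weight `stepWeight 1 (1 / 2)` and replaces its energy by `9000 β` times the
hierarchical energy. -/
noncomputable def comparisonWeight (β : ℝ) (L N : ℕ) (η : TriadicIndex L → ℤ) : ℝ :=
  Real.exp (-((9000 * β) • hierarchicalEnergy L - (chainForm β N).comp (chainProfile ℝ L N))
      (latticeInclusion _ η)) *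
    hierarchicalWeight (stepWeight 1 (1 / 2)) (stepWeight 1 (1 / 2)) L η

theorem isPositiveDefinite_comparisonWeight (hβ : 0 ≤ β) (hL : 3 ^ L ≤ 2 * N + 1) :
    IsPositiveDefinite (comparisonWeight β L N) :=
  ((IsPositiveDefinite.exp_neg_quadraticForm fun η =>
        sub_nonneg.2 (chainForm_chainProfile_le hβ hL η)).comp_addMonoidHom _).mul
    (isPositiveDefinite_hierarchicalWeight isPositiveDefinite_stepWeight
      isPositiveDefinite_stepWeight)

theorem comparisonWeight_mul_gaussianWeight (β : ℝ) (N : ℕ) (η : TriadicIndex L → ℤ) :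
    comparisonWeight β L N η * gaussianWeight (chainForm β N) (chainProfile ℤ L N η) =
      hierarchicalWeight (stepWeight 1 (Real.exp (-(9000 * β)) / 2))
        (stepWeight 1 (Real.exp (-(9000 * β)) / 2)) L η := by
  rw [← exp_neg_sq_mul_stepWeight, ← exp_neg_hierarchicalEnergy_mul_hierarchicalWeight,
    comparisonWeight, gaussianWeight, latticeInclusion_chainProfile, mul_right_comm, ← Real.exp_add]
  congr 2
  simp only [sub_apply, smul_apply, QuadraticMap.comp_apply, smul_eq_mul]
  ring

theorem tsum_mul_comparisonWeight (β : ℝ) (L N : ℕ) (Φ : ℤ → ℝ) :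
    ∑' η, Φ (chainProfile ℤ L N η (chainOrigin N)) *
        (comparisonWeight β L N η * gaussianWeight (chainForm β N) (chainProfile ℤ L N η)) =
      stepSum (Real.exp (-(9000 * β))) L 1 (Real.exp (-(9000 * β)) / 2) Φ := by
  simp only [comparisonWeight_mul_gaussianWeight, chainProfile_chainOrigin]
  rw [stepSum, hierarchicalSum, tsum_eq_sum fun η hη => ?_]
  rw [hierarchicalWeight_eq_zero (fun _ => stepWeight_eq_zero _ _) _ hη, mul_zero]

theorem div_six_le_chainVar (hβ : 0 < β) (hβ' : β < 1 / 1000000) (hL : 3 ^ L ≤ 2 * N + 1) :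
    (L : ℝ) / 6 ≤ chainVar N β 2 2 := by
  set q := Real.exp (-(9000 * β))
  have hq : 0.95 ≤ q := by linarith [Real.add_one_le_exp (-(9000 * β))]
  have hq1 : q ≤ 1 := Real.exp_le_one_iff.2 (by linarith)
  have hmass : 0 < stepSum q L 1 (q / 2) fun _ => 1 :=
    stepSum_one_pos (by linarith) one_pos (by linarith)
  have hginibre := tsum_sq_le_gaussianSecondMoment_mul (chainForm_posDef hβ N) (chainOrigin N)
    (ι := (chainProfile ℤ L N).toAddMonoidHom) (chainProfile_injective ℤ hL)
    (isPositiveDefinite_comparisonWeight hβ.le hL)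
  have hsq := tsum_mul_comparisonWeight β L N fun x => (x : ℝ) ^ 2
  have hone := tsum_mul_comparisonWeight β L N fun _ => 1
  simp only [one_mul] at hone
  simp only [LinearMap.toAddMonoidHom_coe] at hginibre
  rw [hsq, hone, ← chainVar_eq_gaussianSecondMoment] at hginibre
  refine le_of_mul_le_mul_right ?_ hmass
  exact (mul_stepSum_one_le_stepSum_sq hq hq1 one_pos (by linarith) (by linarith)).trans hginibre

theorem log_le_chainVar (hβ : 0 < β) (hβ' : β < 1 / 1000000) (hN : 1 ≤ N) :
    1 / (12 * Real.log 3) * Real.log N ≤ chainVar N β 2 2 := by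
  set L := Nat.log 3 (2 * N + 1)
  have : 0 < Real.log 3 := Real.log_pos (by norm_num)
  have hL : (1 : ℝ) ≤ L := by exact_mod_cast Nat.log_pos (by norm_num) (by omega)
  have hN' : (N : ℝ) ≤ 3 ^ (L + 1) := by
    have : 2 * N + 1 < 3 ^ (L + 1) := Nat.lt_pow_succ_log_self (by norm_num) _
    exact_mod_cast show N ≤ 3 ^ (L + 1) by omega
  calc 1 / (12 * Real.log 3) * Real.log N
      ≤ 1 / (12 * Real.log 3) * Real.log (3 ^ (L + 1)) := by gcongr
    _ = ((L : ℝ) + 1) / 12 := by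
        rw [Real.log_pow]
        push_cast
        field_simp
    _ ≤ (L : ℝ) / 6 := by linarith
    _ ≤ chainVar N β 2 2 :=
        div_six_le_chainVar hβ hβ' (Nat.pow_log_le_self 3 (by omega))

end LowerBound

/-- **Logarithmic delocalisation of the discrete Gaussian long-range chain at `α = 2`,
high temperature.** There exists `β₀ > 0` such that for every `β ∈ (0,β₀)` there exist
constants `c_β > 0` and `C_β < ∞` such that for every `N ≥ 2`,
`c_β ln N ≤ Var_{N,β,2}[φ(0)] ≤ C_β ln N`. -/
theorem gaussian_chain_log_deloc_alpha_eq_two :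
    ∃ β₀ : ℝ, 0 < β₀ ∧
      ∀ β : ℝ, 0 < β → β < β₀ →
        ∃ c C : ℝ, 0 < c ∧
          ∀ N : ℕ, 2 ≤ N →
            c * Real.log N ≤ chainVar N β 2 2 ∧
              chainVar N β 2 2 ≤ C * Real.log N := by
  refine ⟨1 / 1000000, by norm_num, fun β hβ hβ' => ⟨1 / (12 * Real.log 3), 90 / β, ?_,
    fun N hN => ⟨log_le_chainVar hβ hβ' (by omega), chainVar_le_log hβ hN⟩⟩⟩
  have : 0 < Real.log 3 := Real.log_pos (by norm_num)
  positivity
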